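/- arXiv:1410.2336 — 10 statements merged into one kernel-verified Lean document; each statement's English description precedes it below -/
import Mathlib

section
/- Let u, u′ ∈ ℂ^{2n} and A, A′ ∈ sp_{2n}(ℂ). Suppose there exists g ∈ GL_{2n}(ℂ) such that g u = u′, θ(g) u = u′, and g A g⁻¹ = A′ (that is, g maps the point (u, −uᵀ) + A of the enhanced Lie algebra L̃ to (u′, −u′ᵀ) + A′ under the enhanced action). Then there exists h ∈ Sp_{2n}(ℂ) such that h u = u′ and h A h⁻¹ = A′. In other words, every GL_{2n}(ℂ)-orbit in L̃ = ℂ^{2n} ⊕ (ℂ^{2n})* ⊕ gl_{2n}(ℂ) meets the embedded subspace L = ℂ^{2n} ⊕ sp_{2n}(ℂ) (embedded via u + A ↦ (u, −uᵀ) + A) in at most one Sp_{2n}(ℂ)-orbit. -/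
open Matrix

/-- The standard symplectic form matrix `J = [[0, 1ₙ], [−1ₙ, 0]]` on `ℂ^{2n}`,
with `ℂ^{2n}` indexed by `Fin n ⊕ Fin n`. -/
noncomputable def J (n : ℕ) : Matrix (Fin n ⊕ Fin n) (Fin n ⊕ Fin n) ℂ :=
  Matrix.fromBlocks 0 1 (-1) 0

/-- The involutive anti-automorphism `σ(g) = J⁻¹ gᵀ J`. -/
noncomputable def sigmaG (n : ℕ) (g : Matrix (Fin n ⊕ Fin n) (Fin n ⊕ Fin n) ℂ) :
    Matrix (Fin n ⊕ Fin n) (Fin n ⊕ Fin n) ℂ :=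
  (J n)⁻¹ * gᵀ * J n

/-- The involutive automorphism `θ(g) = σ(g)⁻¹`. -/
noncomputable def thetaG (n : ℕ) (g : Matrix (Fin n ⊕ Fin n) (Fin n ⊕ Fin n) ℂ) :
    Matrix (Fin n ⊕ Fin n) (Fin n ⊕ Fin n) ℂ :=
  (sigmaG n g)⁻¹

/-- The symplectic Lie algebra `sp_{2n}(ℂ) = {A : Aᵀ J + J A = 0}`. -/
def spLie (n : ℕ) : Set (Matrix (Fin n ⊕ Fin n) (Fin n ⊕ Fin n) ℂ) :=
  {A | Aᵀ * J n + J n * A = 0}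

theorem poly_sqrt (f : Polynomial ℂ) (hf : f ≠ 0) (h0 : f.eval 0 ≠ 0) :
    ∃ p : Polynomial ℂ, f ∣ p ^ 2 - Polynomial.X := by
  classical
  obtain ⟨q, hq⟩ : ∃ q : Polynomial ℂ, ∀ a ∈ f.roots, q.eval a ^ 2 = a := by
    have hs : ∀ a : ℂ, ∃ b : ℂ, b ^ 2 = a := fun a => IsAlgClosed.exists_pow_nat_eq a (by norm_num)
    choose b hb using hs
    refine ⟨Lagrange.interpolate f.roots.toFinset id b, fun a ha => ?_⟩
    have := Lagrange.eval_interpolate_at_node (s := f.roots.toFinset) (v := id) b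
      (Function.injective_id.injOn) (Multiset.mem_toFinset.2 ha)
    simp only [id] at this
    erw [this]
    exact hb a
  have hdvd : f ∣ (q ^ 2 - Polynomial.X) ^ (Multiset.card f.roots) := by
    have hsplit := (IsAlgClosed.splits f).eq_prod_roots
    have h1 : (f.roots.map (fun a => Polynomial.X - Polynomial.C a)).prod ∣
        (f.roots.map (fun _ => q ^ 2 - Polynomial.X)).prod := by
      apply Multiset.prod_dvd_prod_of_dvd
      intro a ha
      rw [Polynomial.dvd_iff_isRoot]
      simp [hq a ha]
    rw [Multiset.map_const', Multiset.prod_replicate] at h1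
    rw [hsplit]
    have hu : IsUnit (Polynomial.C f.leadingCoeff) :=
      Polynomial.isUnit_C.2 (isUnit_iff_ne_zero.2 (by simpa using hf))
    refine (hu.mul_left_dvd).2 ?_
    rw [← hsplit]
    exact h1
  let x : AdjoinRoot f := AdjoinRoot.mk f q
  let P : Polynomial (AdjoinRoot f) := Polynomial.X ^ 2 - Polynomial.C (AdjoinRoot.root f)
  have hroot : IsUnit (AdjoinRoot.root f) := by
    have hc : IsCoprime Polynomial.X f := by
      rw [(Polynomial.prime_X).irreducible.coprime_iff_not_dvd, Polynomial.X_dvd_iff,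
        Polynomial.coeff_zero_eq_eval_zero]
      exact h0
    obtain ⟨a, b, hab⟩ := hc
    have := congrArg (AdjoinRoot.mk f) hab
    simp only [map_add, map_mul, AdjoinRoot.mk_self, mul_zero, add_zero, AdjoinRoot.mk_X,
      map_one] at this
    exact IsUnit.of_mul_eq_one_right _ this
  have hP : Polynomial.aeval x P = x ^ 2 - AdjoinRoot.root f := by
    simp [P]
  have hnil : IsNilpotent (x ^ 2 - AdjoinRoot.root f) := by
    refine ⟨Multiset.card f.roots, ?_⟩
    have : (x ^ 2 - AdjoinRoot.root f) = AdjoinRoot.mk f (q ^ 2 - Polynomial.X) := by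
      simp [x]
    rw [this, ← map_pow, AdjoinRoot.mk_eq_zero]
    exact hdvd
  have hx : IsUnit x := by
    have : IsUnit (x ^ 2) := by
      have := hnil.isUnit_add_left_of_commute hroot (Commute.all _ _)
      simpa using this
    exact (isUnit_pow_iff (by norm_num)).1 this
  have h2 : IsUnit (2 : AdjoinRoot f) := by
    have := (isUnit_iff_ne_zero.2 (two_ne_zero (α := ℂ))).map (AdjoinRoot.of f)
    rwa [map_ofNat] at this
  obtain ⟨r, ⟨-, hr⟩, -⟩ := Polynomial.existsUnique_nilpotent_sub_and_aeval_eq_zero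
    (P := P) (x := x) (by rw [hP]; exact hnil) (by
      have : Polynomial.aeval x (Polynomial.derivative P) = 2 * x := by
        simp [P, one_add_one_eq_two]
      rw [this]
      exact h2.mul hx)
  obtain ⟨p, rfl⟩ := AdjoinRoot.mk_surjective r
  refine ⟨p, ?_⟩
  rw [← AdjoinRoot.mk_eq_zero]
  simpa [P] using hr

theorem matrix_sqrt {m : Type*} [Fintype m] [DecidableEq m] (s : Matrix m m ℂ) (hs : IsUnit s) :
    ∃ p : Polynomial ℂ, Polynomial.aeval s p * Polynomial.aeval s p = s := by
  obtain ⟨p, q, hp⟩ := poly_sqrt s.charpoly s.charpoly_monic.ne_zero (by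
    rw [Matrix.eval_charpoly]
    have := (Matrix.isUnit_iff_isUnit_det _).1 hs.neg
    simpa using this.ne_zero)
  refine ⟨p, ?_⟩
  have := congrArg (Polynomial.aeval s) hp
  simp only [map_sub, map_pow, map_mul, Matrix.aeval_self_charpoly, zero_mul,
    Polynomial.aeval_X] at this
  rw [← pow_two]
  exact sub_eq_zero.1 this

theorem aeval_adj {m : Type*} [Fintype m] [DecidableEq m] (s K : Matrix m m ℂ)
    (hs : sᵀ * K = K * s) (p : Polynomial ℂ) :
    (Polynomial.aeval s p)ᵀ * K = K * Polynomial.aeval s p := by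
  have hpow : ∀ k : ℕ, (s ^ k)ᵀ * K = K * s ^ k := by
    intro k
    induction k with
    | zero => simp
    | succ k ih =>
      rw [pow_succ, Matrix.transpose_mul, Matrix.mul_assoc, ih, ← Matrix.mul_assoc, hs,
        Matrix.mul_assoc, ← pow_succ', pow_succ]
  induction p using Polynomial.induction_on' with
  | add p q hp hq => simp [Matrix.add_mul, Matrix.mul_add, hp, hq]
  | monomial k a =>
    rw [Polynomial.aeval_monomial, ← Algebra.smul_def, Matrix.transpose_smul, Matrix.smul_mul,
      hpow, Matrix.mul_smul]

theorem aeval_fix {m : Type*} [Fintype m] [DecidableEq m] (s : Matrix m m ℂ) (u : m → ℂ)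
    (hs : s *ᵥ u = u) (p : Polynomial ℂ) :
    (Polynomial.aeval s p) *ᵥ u = p.eval 1 • u := by
  have hpow : ∀ k : ℕ, (s ^ k) *ᵥ u = u := by
    intro k
    induction k with
    | zero => simp
    | succ k ih => rw [pow_succ, ← Matrix.mulVec_mulVec, hs, ih]
  induction p using Polynomial.induction_on' with
  | add p q hp hq => simp [Matrix.add_mulVec, add_smul, hp, hq]
  | monomial k a =>
    rw [Polynomial.aeval_monomial, ← Algebra.smul_def, Matrix.smul_mulVec, hpow]
    simp

theorem matrix_sqrt_fix {m : Type*} [Fintype m] [DecidableEq m] (s : Matrix m m ℂ)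
    (hs : IsUnit s) (u : m → ℂ) (hu : s *ᵥ u = u) :
    ∃ p : Polynomial ℂ, Polynomial.aeval s p * Polynomial.aeval s p = s ∧
      Polynomial.aeval s p *ᵥ u = u := by
  obtain ⟨p, hp⟩ := matrix_sqrt s hs
  have hc := aeval_fix s u hu p
  have h2 : (p.eval 1 * p.eval 1) • u = u := by
    rw [mul_smul, ← hc, ← Matrix.mulVec_smul, ← hc, Matrix.mulVec_mulVec, hp, hu]
  by_cases h0 : u = 0
  · exact ⟨p, hp, by simp [h0]⟩
  have h3 : p.eval 1 * p.eval 1 = 1 := by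
    have : (p.eval 1 * p.eval 1 - 1) • u = 0 := by rw [sub_smul, h2, one_smul, sub_self]
    exact sub_eq_zero.1 ((smul_eq_zero.1 this).resolve_right h0)
  rcases mul_self_eq_one_iff.1 h3 with h | h
  · exact ⟨p, hp, by rw [hc, h, one_smul]⟩
  · exact ⟨-p, by simpa using hp, by simp [Matrix.neg_mulVec, hc, h]⟩

theorem J_sq (n : ℕ) : J n * J n = -1 := by
  simp [_root_.J, Matrix.fromBlocks_multiply, ← Matrix.fromBlocks_one, Matrix.fromBlocks_neg]

theorem J_tr (n : ℕ) : (J n)ᵀ = - J n := by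
  simp [_root_.J, Matrix.fromBlocks_transpose, Matrix.fromBlocks_neg]

theorem J_unit (n : ℕ) : IsUnit (J n) :=
  IsUnit.of_mul_eq_one (-J n) (by rw [mul_neg, J_sq, neg_neg])

/-- Every `GL_{2n}(ℂ)`-orbit in the enhanced Lie algebra
`L̃ = ℂ^{2n} ⊕ (ℂ^{2n})* ⊕ gl_{2n}(ℂ)` meets the embedded subspace
`L = ℂ^{2n} ⊕ sp_{2n}(ℂ)` (embedded via `u + A ↦ (u, −uᵀ) + A`) in at most one
`Sp_{2n}(ℂ)`-orbit: if `g ∈ GL_{2n}(ℂ)` sends `(u, −uᵀ) + A` to `(u′, −u′ᵀ) + A′`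
(i.e. `g u = u′`, `θ(g) u = u′` and `g A g⁻¹ = A′`), then some `h ∈ Sp_{2n}(ℂ)`
satisfies `h u = u′` and `h A h⁻¹ = A′`. -/
theorem enhanced_orbit_embedding_Sp (n : ℕ) (hn : 1 ≤ n)
    (u u' : (Fin n ⊕ Fin n) → ℂ)
    (A A' : Matrix (Fin n ⊕ Fin n) (Fin n ⊕ Fin n) ℂ)
    (hA : A ∈ spLie n) (hA' : A' ∈ spLie n)
    (g : Matrix (Fin n ⊕ Fin n) (Fin n ⊕ Fin n) ℂ) (hg : IsUnit g)
    (h1 : g *ᵥ u = u') (h2 : thetaG n g *ᵥ u = u')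
    (h3 : g * A * g⁻¹ = A') :
    ∃ h : Matrix (Fin n ⊕ Fin n) (Fin n ⊕ Fin n) ℂ,
      hᵀ * J n * h = J n ∧ h *ᵥ u = u' ∧ h * A * h⁻¹ = A' := by
  have hJ := J_unit n
  have hJd := (Matrix.isUnit_iff_isUnit_det _).1 hJ
  have hgd := (Matrix.isUnit_iff_isUnit_det _).1 hg
  have hσ : IsUnit (sigmaG n g) := by
    have hJi : IsUnit (J n)⁻¹ := (Matrix.isUnit_nonsing_inv_iff).2 hJ
    have hgt : IsUnit gᵀ := (Matrix.isUnit_transpose _).2 hg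
    exact (hJi.mul hgt).mul hJ
  have hσd := (Matrix.isUnit_iff_isUnit_det _).1 hσ
  obtain ⟨s, hsdef⟩ : ∃ s, s = sigmaG n g * g := ⟨_, rfl⟩
  have hs : IsUnit s := hsdef ▸ hσ.mul hg
  have hJs : J n * s = gᵀ * J n * g := by
    rw [hsdef, sigmaG]
    simp only [Matrix.mul_assoc]
    rw [Matrix.mul_nonsing_inv_cancel_left _ _ hJd]
  have hsu : s *ᵥ u = u := by
    rw [hsdef, ← Matrix.mulVec_mulVec, h1, ← h2, thetaG, Matrix.mulVec_mulVec,
      Matrix.mul_nonsing_inv _ hσd, Matrix.one_mulVec]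
  have hsJ : sᵀ * J n = J n * s := by
    have := congrArg Matrix.transpose hJs
    simp only [Matrix.transpose_mul, Matrix.transpose_transpose, J_tr, Matrix.mul_neg,
      Matrix.neg_mul, neg_inj] at this
    rw [this, hJs, Matrix.mul_assoc]
  have hgA : g * A = A' * g := by
    rw [← h3, Matrix.nonsing_inv_mul_cancel_right _ _ hgd]
  have hA1 : Aᵀ * J n = -(J n * A) := eq_neg_of_add_eq_zero_left hA
  have hA2 : A'ᵀ * J n = -(J n * A') := eq_neg_of_add_eq_zero_left hA'
  have hcomm : s * A = A * s := by
    apply hJ.mul_left_cancel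
    calc J n * (s * A) = gᵀ * (J n * A') * g := by
          rw [← Matrix.mul_assoc, hJs, Matrix.mul_assoc, hgA]; simp only [Matrix.mul_assoc]
      _ = -((A' * g)ᵀ * J n * g) := by
          rw [Matrix.transpose_mul, Matrix.mul_assoc gᵀ A'ᵀ, hA2]
          simp only [Matrix.mul_neg, Matrix.neg_mul, neg_neg]
      _ = -(Aᵀ * J n * s) := by
          rw [← hgA, Matrix.transpose_mul, Matrix.mul_assoc Aᵀ (J n) s, hJs]
          simp only [Matrix.mul_assoc]
      _ = J n * (A * s) := by
          rw [hA1, Matrix.neg_mul, neg_neg, Matrix.mul_assoc]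
  obtain ⟨p, hp, hpu⟩ := matrix_sqrt_fix s hs u hsu
  have hrJ := aeval_adj s (J n) hsJ p
  have hrA : Commute A (Polynomial.aeval s p) := by
    have : Commute A s := hcomm.symm
    rw [Polynomial.aeval_eq_sum_range]
    exact Commute.sum_right _ _ _ fun i _ => (this.pow_right i).smul_right _
  obtain ⟨r, hr⟩ : ∃ r, r = Polynomial.aeval s p := ⟨_, rfl⟩
  rw [← hr] at hp hpu hrJ hrA
  have hru : IsUnit r.det := by
    have := (Matrix.isUnit_iff_isUnit_det _).1 hs
    rw [← hp, Matrix.det_mul] at this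
    exact isUnit_of_mul_isUnit_left this
  refine ⟨g * r⁻¹, ?_, ?_, ?_⟩
  · calc (g * r⁻¹)ᵀ * J n * (g * r⁻¹) = (r⁻¹)ᵀ * (gᵀ * J n * g) * r⁻¹ := by
          rw [Matrix.transpose_mul]; simp only [Matrix.mul_assoc]
      _ = (r⁻¹)ᵀ * (J n * r) := by
          rw [← hJs, ← hp, Matrix.mul_assoc, Matrix.mul_assoc (J n), Matrix.mul_assoc r,
            Matrix.mul_nonsing_inv _ hru, Matrix.mul_one]
      _ = J n := by
          rw [← hrJ, ← Matrix.mul_assoc, ← Matrix.transpose_mul, Matrix.mul_nonsing_inv _ hru,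
            Matrix.transpose_one, Matrix.one_mul]
  · have : r⁻¹ *ᵥ u = u := by
      conv_lhs => rw [← hpu]
      rw [Matrix.mulVec_mulVec, Matrix.nonsing_inv_mul _ hru, Matrix.one_mulVec]
    rw [← Matrix.mulVec_mulVec, this, h1]
  · rw [Matrix.mul_inv_rev, Matrix.nonsing_inv_nonsing_inv _ hru, ← h3]
    have : r⁻¹ * A * r = A := by
      rw [Matrix.mul_assoc, hrA.eq, Matrix.nonsing_inv_mul_cancel_left _ _ hru]
    calc g * r⁻¹ * A * (r * g⁻¹) = g * (r⁻¹ * A * r) * g⁻¹ := by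
          simp only [Matrix.mul_assoc]
      _ = _ := by rw [this]
end

section
/- Suppose that for every x ∈ L and every h ∈ G̃ with h·x = x and σ_G(h) = h, there exists f ∈ G̃ with f·x = x, σ_G(f) = f and f² = h. Then the natural map L/G → L̃/G̃ is injective: for all x, y ∈ L, if there exists g ∈ G̃ with g·x = y, then there exists g′ ∈ G with g′·x = y. Equivalently, every G̃-orbit in L̃ meets L in either the empty set or a single G-orbit. -/
/-- Abstract orbit embedding theorem.  Let `G̃` be a group acting on a set `L̃`,
`σG` an involutive anti-automorphism of `G̃`, and `σL` an involution of `L̃`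
satisfying `σL(g·x) = σG(g)⁻¹ · σL(x)`.  Put `G = {g : σG g = g⁻¹}` and
`L = {x : σL x = x}`.  Assume that for every `x ∈ L`, every `σG`-fixed element
`h` of the stabilizer of `x` admits a `σG`-fixed square root `f` in the
stabilizer of `x`.  Then the natural map `L/G → L̃/G̃` is injective: whenever
`x, y ∈ L` lie in the same `G̃`-orbit, they lie in the same `G`-orbit. -/
theorem abstract_orbit_embedding {G X : Type*} [Group G] [MulAction G X]
    (σG : G → G)
    (hanti : ∀ g h : G, σG (g * h) = σG h * σG g)
    (hGinv : ∀ g : G, σG (σG g) = g)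
    (σL : X → X) (hLinv : ∀ x : X, σL (σL x) = x)
    (hcompat : ∀ (g : G) (x : X), σL (g • x) = (σG g)⁻¹ • σL x)
    (hsq : ∀ x : X, σL x = x → ∀ h : G, h • x = x → σG h = h →
      ∃ f : G, f • x = x ∧ σG f = f ∧ f ^ 2 = h) :
    ∀ x y : X, σL x = x → σL y = y → (∃ g : G, g • x = y) →
      ∃ g' : G, σG g' = g'⁻¹ ∧ g' • x = y := by
  rintro x y hx hy ⟨g, hg⟩
  have h1 : σG 1 = 1 := by
    have h := hanti 1 1
    rw [mul_one] at h
    exact left_eq_mul.mp h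
  have hy' : σG g • y = x := by
    have h := hcompat g x
    rw [hg, hx, hy] at h
    rw [h, smul_inv_smul]
  obtain ⟨f, hfx, hf, hf2⟩ := hsq x hx (σG g * g) (by rw [mul_smul, hg, hy'])
    (by rw [hanti, hGinv])
  have hfi : σG f⁻¹ = f⁻¹ := by
    have h := hanti f f⁻¹
    rw [mul_inv_cancel, h1, hf] at h
    exact eq_inv_of_mul_eq_one_left h.symm
  refine ⟨g * f⁻¹, ?_, ?_⟩
  · have h : σG g = f ^ 2 * g⁻¹ := by rw [hf2]; group
    rw [hanti, hfi, h]
    group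
  · rw [mul_smul, inv_smul_eq_iff.mpr hfx.symm, hg]
end

section
/- Let u, u′ ∈ ℂ^{2n} and A, A′ ∈ sp_{2n}(ℂ). Suppose there exist a, b ∈ GL_n(ℂ) such that, writing g = diag(a, b) ∈ GL_{2n}(ℂ) (block diagonal), one has g u = u′, θ(g) u = u′ (where θ(diag(a,b)) = diag((bᵀ)⁻¹, (aᵀ)⁻¹)), and g A g⁻¹ = A′. Then there exists c ∈ GL_n(ℂ) such that, with h = diag(c, (cᵀ)⁻¹), one has h u = u′ and h A h⁻¹ = A′. In other words, every K̃ = GL_n(ℂ) × GL_n(ℂ)-orbit (block-diagonally embedded in GL_{2n}(ℂ)) in L̃ meets the embedded subspace L = ℂ^{2n} ⊕ sp_{2n}(ℂ) in at most one K-orbit, where K = Sp_{2n}(ℂ) ∩ K̃ = {diag(a, (aᵀ)⁻¹) : a ∈ GL_n(ℂ)}. -/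
open Matrix

open Polynomial in
theorem sqrt_poly_aux (f : ℂ[X]) (hf : f ≠ 0) (h0 : f.eval 0 ≠ 0) : ∃ p : ℂ[X], f ∣ p ^ 2 - X := by
  classical
  have hsq : ∀ z : ℂ, ∃ w : ℂ, w ^ 2 = z := fun z => IsAlgClosed.exists_pow_nat_eq z (by norm_num)
  choose sq hsq using hsq
  let q := Lagrange.interpolate f.roots.toFinset id sq
  have hq : ∀ a ∈ f.roots, X - C a ∣ q ^ 2 - X := by
    intro a ha
    rw [dvd_iff_isRoot, IsRoot.def, eval_sub, eval_pow, eval_X]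
    have : eval (id a) q = sq a :=
      Lagrange.eval_interpolate_at_node (s := f.roots.toFinset) (v := id) sq
        Function.injective_id.injOn (Multiset.mem_toFinset.2 ha)
    rw [id] at this
    rw [this, hsq, sub_self]
  have hdvd : f ∣ (q ^ 2 - X) ^ (Multiset.card f.roots) := by
    have hs : f.Splits := IsAlgClosed.splits f
    rw [hs.eq_prod_roots]
    have hl : IsUnit (C f.leadingCoeff) := isUnit_C.2 (isUnit_iff_ne_zero.2 (leadingCoeff_ne_zero.2 hf))
    rw [hl.mul_left_dvd]
    have key : ∀ s : Multiset ℂ, (∀ a ∈ s, X - C a ∣ q ^ 2 - X) →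
        (s.map (fun a => X - C a)).prod ∣ (q ^ 2 - X) ^ (Multiset.card s) := by
      intro s
      induction s using Multiset.induction_on with
      | empty => simp
      | cons a s ih =>
        intro h
        rw [Multiset.map_cons, Multiset.prod_cons, Multiset.card_cons, pow_succ']
        exact mul_dvd_mul (h a (by simp)) (ih fun b hb => h b (by simp [hb]))
    rw [← hs.eq_prod_roots]
    exact key _ hq
  let S := AdjoinRoot f
  let m : S := AdjoinRoot.mk f X
  let x : S := AdjoinRoot.mk f q
  have hnil : IsNilpotent (x ^ 2 - m) := by
    refine ⟨Multiset.card f.roots, ?_⟩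
    have := AdjoinRoot.mk_eq_zero.2 hdvd
    simpa [x, m] using this
  have hm : IsUnit m := by
    have hdiv : (X : ℂ[X]) ∣ f - C (f.eval 0) := by
      rw [X_dvd_iff, coeff_sub, coeff_zero_eq_eval_zero, coeff_C_zero, sub_self]
    obtain ⟨k, hk⟩ := hdiv
    have h2 : m * AdjoinRoot.mk f k = AdjoinRoot.mk f (C (-(f.eval 0))) := by
      simp only [m]
      rw [← map_mul, ← hk]
      simp
    have h3 : IsUnit (AdjoinRoot.mk f (C (-(f.eval 0)))) :=
      (isUnit_C.2 (isUnit_iff_ne_zero.2 (neg_ne_zero.2 h0))).map _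
    rw [← h2] at h3
    exact isUnit_of_mul_isUnit_left h3
  have hx : IsUnit x := by
    have h4 : IsUnit (x ^ 2) := by
      have := hnil.isUnit_add_left_of_commute hm (Commute.all _ _)
      simpa using this
    exact (isUnit_pow_iff (by norm_num)).1 h4
  have h2u : IsUnit (2 : S) := by
    have : IsUnit (AdjoinRoot.mk f (C 2)) :=
      (isUnit_C.2 (isUnit_iff_ne_zero.2 (two_ne_zero))).map _
    rwa [map_ofNat, map_ofNat] at this
  obtain ⟨r, ⟨-, hr⟩, -⟩ := Polynomial.existsUnique_nilpotent_sub_and_aeval_eq_zero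
    (P := (X ^ 2 - C m : S[X])) (x := x) (by simpa using hnil)
    (by simpa [one_add_one_eq_two] using h2u.mul hx)
  obtain ⟨p, rfl⟩ := AdjoinRoot.mk_surjective r
  refine ⟨p, AdjoinRoot.mk_eq_zero.1 ?_⟩
  simpa [m] using hr

open Polynomial in
theorem exists_sqrt_poly {n : ℕ} (m : Matrix (Fin n) (Fin n) ℂ) (hm : IsUnit m) :
    ∃ p : ℂ[X], (aeval m p) ^ 2 = m := by
  obtain ⟨p, k, hk⟩ := sqrt_poly_aux m.charpoly m.charpoly_monic.ne_zero (by
    rw [Matrix.eval_charpoly]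
    simp only [map_zero, zero_sub, Matrix.det_neg]
    exact mul_ne_zero (pow_ne_zero _ (by simp)) ((Matrix.isUnit_iff_isUnit_det _).1 hm).ne_zero)
  refine ⟨p, ?_⟩
  have := congrArg (aeval m) hk
  rw [map_mul, Matrix.aeval_self_charpoly, zero_mul, map_sub, aeval_X, map_pow, sub_eq_zero] at this
  exact this

open Polynomial in
theorem aeval_blocks_aux {n : ℕ} (m : Matrix (Fin n) (Fin n) ℂ) (p : ℂ[X]) :
    aeval (Matrix.fromBlocks m 0 0 mᵀ) p
      = Matrix.fromBlocks (aeval m p) 0 0 (aeval m p)ᵀ := by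
  induction p using Polynomial.induction_on with
  | C a =>
    simp only [aeval_C, Matrix.algebraMap_eq_diagonal, Matrix.diagonal_transpose]
    rw [Matrix.fromBlocks_diagonal]
    congr 1
    ext i
    cases i <;> rfl
  | add p q hp hq =>
    simp only [map_add, hp, hq, Matrix.fromBlocks_add, Matrix.transpose_add, add_zero]
  | monomial k a h =>
    rw [pow_succ, ← mul_assoc, map_mul, h, map_mul _ (C a * X ^ k) X, aeval_X, aeval_X, Matrix.fromBlocks_multiply]
    have : Commute (aeval m (C a * X ^ k)) m := by
      have := Commute.all (C a * X ^ k) (X : ℂ[X])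
      simpa only [aeval_X] using this.map (aeval m)
    simp only [Matrix.mul_zero, Matrix.zero_mul, add_zero, zero_add]
    rw [← Matrix.transpose_mul, this.eq]

open Polynomial in
theorem aeval_fix_aux {ι : Type*} [Fintype ι] [DecidableEq ι] (s : Matrix ι ι ℂ) (u : ι → ℂ)
    (h : s *ᵥ u = u) (p : ℂ[X]) : (aeval s p) *ᵥ u = p.eval 1 • u := by
  induction p using Polynomial.induction_on with
  | C a => simp [Algebra.algebraMap_eq_smul_one, Matrix.smul_mulVec]
  | add p q hp hq => simp only [map_add, Matrix.add_mulVec, hp, hq, eval_add, add_smul]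
  | monomial k a hk =>
    rw [pow_succ, ← mul_assoc, map_mul, aeval_X, ← Matrix.mulVec_mulVec, h, hk]
    simp

open Polynomial in
theorem aeval_comm_aux {R : Type*} [Ring R] [Algebra ℂ R] (s A : R)
    (h : Commute s A) (p : ℂ[X]) : Commute (aeval s p) A := by
  induction p using Polynomial.induction_on with
  | C a => rw [aeval_C]; exact Algebra.commute_algebraMap_left a A
  | add p q hp hq => rw [map_add]; exact hp.add_left hq
  | monomial k a hk =>
    rw [pow_succ, ← mul_assoc, map_mul, aeval_X]
    exact hk.mul_left h

theorem good_sqrt {n : ℕ} (m : Matrix (Fin n) (Fin n) ℂ) (hm : IsUnit m)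
    (u : (Fin n ⊕ Fin n) → ℂ) (A : Matrix (Fin n ⊕ Fin n) (Fin n ⊕ Fin n) ℂ)
    (hu : Matrix.fromBlocks m 0 0 mᵀ *ᵥ u = u)
    (hA : Commute (Matrix.fromBlocks m 0 0 mᵀ) A) :
    ∃ r : Matrix (Fin n) (Fin n) ℂ, r * r = m ∧ Matrix.fromBlocks r 0 0 rᵀ *ᵥ u = u ∧
      Commute (Matrix.fromBlocks r 0 0 rᵀ) A := by
  obtain ⟨p, hp⟩ := exists_sqrt_poly m hm
  have hb := aeval_blocks_aux m p
  have hc := aeval_comm_aux _ A hA p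
  have hf := aeval_fix_aux _ u hu p
  rw [hb] at hc hf
  rw [pow_two] at hp
  set r := Polynomial.aeval m p
  by_cases h0 : u = 0
  · exact ⟨r, hp, by simp [h0], hc⟩
  have hsq : Matrix.fromBlocks r 0 0 rᵀ * Matrix.fromBlocks r 0 0 rᵀ
      = Matrix.fromBlocks m 0 0 mᵀ := by
    rw [Matrix.fromBlocks_multiply]
    simp [← Matrix.transpose_mul, hp]
  have h1 : (p.eval 1 * p.eval 1) • u = (1 : ℂ) • u := by
    rw [mul_smul, ← hf, ← Matrix.mulVec_smul, ← hf, Matrix.mulVec_mulVec, hsq, hu, one_smul]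
  have h2 := smul_left_injective ℂ h0 h1
  rcases mul_self_eq_one_iff.1 h2 with h | h
  · exact ⟨r, hp, by rw [hf, h, one_smul], hc⟩
  · have hneg : Matrix.fromBlocks (-r) 0 0 (-r)ᵀ = - Matrix.fromBlocks r 0 0 rᵀ := by
      rw [Matrix.fromBlocks_neg]; simp
    refine ⟨-r, by simpa using hp, ?_, ?_⟩
    · rw [hneg, Matrix.neg_mulVec, hf, h]; simp
    · rw [hneg]; exact hc.neg_left

theorem sp_transpose {n : ℕ} {A : Matrix (Fin n ⊕ Fin n) (Fin n ⊕ Fin n) ℂ} (hA : A ∈ spLie n) :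
    Aᵀ = J n * A * J n := by
  have hJ : J n * J n = -1 := by
    simp [_root_.J, Matrix.fromBlocks_multiply, ← Matrix.fromBlocks_one, Matrix.fromBlocks_neg]
  have h : Aᵀ * J n + J n * A = 0 := hA
  have h2 := congrArg (· * J n) h
  simp only [add_mul, zero_mul] at h2
  rw [mul_assoc, hJ, mul_neg, mul_one] at h2
  exact (neg_add_eq_zero.1 h2)

/-- Every `K̃ = GL_n(ℂ) × GL_n(ℂ)`-orbit (block-diagonally embedded in
`GL_{2n}(ℂ)`) in the enhanced Lie algebra `L̃` meets the embedded subspace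
`L = ℂ^{2n} ⊕ sp_{2n}(ℂ)` in at most one `K`-orbit, where
`K = Sp_{2n}(ℂ) ∩ K̃ = {diag(a, (aᵀ)⁻¹)}`: if `g = diag(a, b)` with
`a, b ∈ GL_n(ℂ)` satisfies `g u = u′`, `θ(g) u = u′`
(with `θ(diag(a,b)) = diag((bᵀ)⁻¹, (aᵀ)⁻¹)`) and `g A g⁻¹ = A′`, then there
exists `c ∈ GL_n(ℂ)` with `h = diag(c, (cᵀ)⁻¹)` satisfying `h u = u′` and
`h A h⁻¹ = A′`. -/
theorem enhanced_orbit_embedding_K (n : ℕ) (hn : 1 ≤ n)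
    (u u' : (Fin n ⊕ Fin n) → ℂ)
    (A A' : Matrix (Fin n ⊕ Fin n) (Fin n ⊕ Fin n) ℂ)
    (hA : A ∈ spLie n) (hA' : A' ∈ spLie n)
    (a b : Matrix (Fin n) (Fin n) ℂ) (ha : IsUnit a) (hb : IsUnit b)
    (h1 : Matrix.fromBlocks a 0 0 b *ᵥ u = u')
    (h2 : Matrix.fromBlocks (bᵀ)⁻¹ 0 0 (aᵀ)⁻¹ *ᵥ u = u')
    (h3 : Matrix.fromBlocks a 0 0 b * A * (Matrix.fromBlocks a 0 0 b)⁻¹ = A') :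
    ∃ c : Matrix (Fin n) (Fin n) ℂ, IsUnit c ∧
      Matrix.fromBlocks c 0 0 (cᵀ)⁻¹ *ᵥ u = u' ∧
      Matrix.fromBlocks c 0 0 (cᵀ)⁻¹ * A * (Matrix.fromBlocks c 0 0 (cᵀ)⁻¹)⁻¹ = A' := by
  have hJ : J n * J n = -1 := by
    simp [_root_.J, Matrix.fromBlocks_multiply, ← Matrix.fromBlocks_one, Matrix.fromBlocks_neg]
  have haT : IsUnit aᵀ := (Matrix.isUnit_transpose a).2 ha
  have hbT : IsUnit bᵀ := (Matrix.isUnit_transpose b).2 hb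
  have hdet : ∀ {x : Matrix (Fin n) (Fin n) ℂ}, IsUnit x → IsUnit x.det :=
    fun h => (Matrix.isUnit_iff_isUnit_det _).1 h
  have hg : IsUnit (Matrix.fromBlocks a 0 0 b) := by
    rw [Matrix.isUnit_iff_isUnit_det, Matrix.det_fromBlocks_zero₂₁]
    exact (hdet ha).mul (hdet hb)
  have hgd := (Matrix.isUnit_iff_isUnit_det _).1 hg
  set g := Matrix.fromBlocks a 0 0 b with hgdef
  set t := Matrix.fromBlocks bᵀ 0 0 aᵀ with htdef
  have hgA : g * A = A' * g := by
    rw [← h3, Matrix.mul_assoc _ g⁻¹ g, Matrix.nonsing_inv_mul _ hgd, Matrix.mul_one]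
  have hJg : J n * gᵀ * J n = -t := by
    simp [_root_.J, hgdef, htdef, Matrix.fromBlocks_transpose, Matrix.fromBlocks_multiply,
      Matrix.fromBlocks_neg]
  have hAt : A * t = t * A' := by
    have h := congrArg Matrix.transpose hgA
    rw [Matrix.transpose_mul, Matrix.transpose_mul, sp_transpose hA, sp_transpose hA'] at h
    have h' := congrArg (fun x => J n * x * J n) h
    have e1 : J n * (J n * A * J n * gᵀ) * J n = (J n * J n) * A * (J n * gᵀ * J n) := by
      simp only [mul_assoc]
    have e2 : J n * (gᵀ * (J n * A' * J n)) * J n = (J n * gᵀ * J n) * A' * (J n * J n) := by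
      simp only [mul_assoc]
    simp only [e1, e2, hJ, hJg] at h'
    simpa using h'
  have hs : t * g = Matrix.fromBlocks (bᵀ * a) 0 0 (bᵀ * a)ᵀ := by
    simp [hgdef, htdef, Matrix.fromBlocks_multiply]
  have hcomm : Commute (t * g) A := by
    change t * g * A = A * (t * g)
    rw [mul_assoc, hgA, ← mul_assoc, ← hAt, mul_assoc]
  have hfix : (t * g) *ᵥ u = u := by
    rw [← Matrix.mulVec_mulVec, h1, ← h2, Matrix.mulVec_mulVec, htdef, Matrix.fromBlocks_multiply]
    simp [Matrix.mul_nonsing_inv _ (hdet haT), Matrix.mul_nonsing_inv _ (hdet hbT)]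
  rw [hs] at hcomm hfix
  obtain ⟨r, hr, hru, hrA⟩ := good_sqrt (bᵀ * a) (hbT.mul ha) u A hfix hcomm
  have hrU : IsUnit r := by
    have : IsUnit (r * r) := hr ▸ hbT.mul ha
    rw [Matrix.isUnit_iff_isUnit_det, Matrix.det_mul] at this
    exact (Matrix.isUnit_iff_isUnit_det _).2 (isUnit_of_mul_isUnit_left this)
  have hrT : IsUnit rᵀ := (Matrix.isUnit_transpose r).2 hrU
  have hri : IsUnit r⁻¹ := (Matrix.isUnit_nonsing_inv_iff).2 hrU
  have hc : IsUnit (a * r⁻¹) := ha.mul hri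
  refine ⟨a * r⁻¹, hc, ?_⟩
  set S := Matrix.fromBlocks r 0 0 rᵀ with hS
  set h := Matrix.fromBlocks (a * r⁻¹) 0 0 ((a * r⁻¹)ᵀ)⁻¹ with hh
  have hinv : ((a * r⁻¹)ᵀ)⁻¹ * rᵀ = b := by
    have hcT : IsUnit (a * r⁻¹)ᵀ := (Matrix.isUnit_transpose _).2 hc
    have : (a * r⁻¹)ᵀ * b = rᵀ := by
      have h5 : aᵀ * b = rᵀ * rᵀ := by
        rw [← Matrix.transpose_mul, hr]; simp
      rw [Matrix.transpose_mul, Matrix.mul_assoc, h5, Matrix.transpose_nonsing_inv,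
        ← Matrix.mul_assoc, Matrix.nonsing_inv_mul _ (hdet hrT), Matrix.one_mul]
    rw [← this, ← Matrix.mul_assoc, Matrix.nonsing_inv_mul _ (hdet hcT), Matrix.one_mul]
  have hhS : h * S = g := by
    rw [hh, hS, Matrix.fromBlocks_multiply, hinv, Matrix.mul_assoc,
      Matrix.nonsing_inv_mul _ (hdet hrU)]
    simp [hgdef]
  have hdets : IsUnit (h.det * S.det) := by rw [← Matrix.det_mul, hhS]; exact hgd
  have hhd : IsUnit h.det := isUnit_of_mul_isUnit_left hdets
  have hSd : IsUnit S.det := isUnit_of_mul_isUnit_right hdets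
  constructor
  · rw [← h1, ← hhS, ← Matrix.mulVec_mulVec, hru]
  · have e : h * A = A' * h := by
      have e3 : h * A * S = A' * h * S := by
        rw [mul_assoc, ← hrA.eq, ← mul_assoc, hhS, hgA, mul_assoc, hhS]
      have := congrArg (· * S⁻¹) e3
      simpa [Matrix.mul_nonsing_inv_cancel_right _ _ hSd] using this
    rw [e, Matrix.mul_nonsing_inv_cancel_right _ _ hhd]
end

section
/- Let u, u′ ∈ ℂ^{2n} and let A, B, A′, B′ ∈ M_n(ℂ) be symmetric matrices (Aᵀ = A, Bᵀ = B, A′ᵀ = A′, B′ᵀ = B′). Suppose there exist a, b ∈ GL_n(ℂ) such that diag(a,b) u = u′, diag((bᵀ)⁻¹, (aᵀ)⁻¹) u = u′, a A b⁻¹ = A′ and b B a⁻¹ = B′. Then there exists c ∈ GL_n(ℂ) such that diag(c, (cᵀ)⁻¹) u = u′, c A cᵀ = A′ and (cᵀ)⁻¹ B c⁻¹ = B′. This realizes the orbit embedding (ℂ^{2n} ⊕ Sym_n(ℂ) ⊕ Sym_n(ℂ))/GL_n(ℂ) ↪ (ℂ^{2n} ⊕ (ℂ^{2n})* ⊕ M_n(ℂ)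 ⊕ M_n(ℂ))/(GL_n(ℂ) × GL_n(ℂ)). -/
open Matrix

lemma aux_sqrt_poly (s : Multiset ℂ) (hs : (0:ℂ) ∉ s) :
    ∃ f : Polynomial ℂ, (s.map (fun z => Polynomial.X - Polynomial.C z)).prod ∣
      Polynomial.X * f ^ 2 - 1 := by
  induction s using Multiset.induction_on with
  | empty => exact ⟨0, by simp⟩
  | cons z s ih =>
    have hz : z ≠ 0 := by rintro rfl; simp at hs
    obtain ⟨f, r, hr⟩ := ih (fun h => hs (Multiset.mem_cons_of_mem h))
    rw [Multiset.map_cons, Multiset.prod_cons]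
    set m := (s.map (fun z => Polynomial.X - Polynomial.C z)).prod with hm
    have hev : z * f.eval z ^ 2 - 1 = m.eval z * r.eval z := by
      have := congrArg (Polynomial.eval z) hr
      simpa using this
    have ht : ∃ t : ℂ, r.eval z + 2 * z * f.eval z * t + m.eval z * z * t ^ 2 = 0 := by
      by_cases h0 : m.eval z = 0
      · rw [h0] at hev ⊢
        have hf : f.eval z ≠ 0 := by
          intro h; rw [h] at hev; norm_num at hev
        refine ⟨-r.eval z / (2 * z * f.eval z), ?_⟩
        field_simp
        ring
      · obtain ⟨w, hw⟩ := IsAlgClosed.exists_pow_nat_eq (z⁻¹) (n := 2) (by norm_num)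
        refine ⟨(w - f.eval z) / m.eval z, ?_⟩
        have hw' : z * w ^ 2 = 1 := by rw [hw]; exact mul_inv_cancel₀ hz
        field_simp
        linear_combination hw' - hev
    obtain ⟨t, ht⟩ := ht
    refine ⟨f + m * Polynomial.C t, ?_⟩
    have h2 : Polynomial.X - Polynomial.C z ∣
        r + 2 * Polynomial.X * f * Polynomial.C t + m * Polynomial.X * Polynomial.C t ^ 2 := by
      rw [Polynomial.dvd_iff_isRoot]
      simpa using ht
    obtain ⟨k, hk⟩ := h2
    refine ⟨k, ?_⟩
    linear_combination hr + m * hk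

lemma aux_sqrt_mat {n : ℕ} (p : Matrix (Fin n) (Fin n) ℂ) (hp : IsUnit p) :
    ∃ f : Polynomial ℂ, f.eval 1 = 1 ∧ p * Polynomial.aeval p f ^ 2 = 1 := by
  have h0 : (0:ℂ) ∉ ((1:ℂ) ::ₘ p.charpoly.roots) := by
    rw [Multiset.mem_cons]
    rintro (h | h)
    · norm_num at h
    · have h1 := Polynomial.isRoot_of_mem_roots h
      have h2 := p.det_eq_sign_charpoly_coeff
      rw [Polynomial.coeff_zero_eq_eval_zero, h1.eq_zero, mul_zero] at h2
      have := (Matrix.isUnit_iff_isUnit_det p).1 hp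
      rw [h2] at this
      simp at this
  obtain ⟨f, hf⟩ := aux_sqrt_poly _ h0
  rw [Multiset.map_cons, Multiset.prod_cons,
    ← (IsAlgClosed.splits p.charpoly).eq_prod_roots_of_monic p.charpoly_monic] at hf
  obtain ⟨k, hk⟩ := hf
  have h1 : f.eval 1 ^ 2 = 1 := by
    have := congrArg (Polynomial.eval 1) hk
    simp at this
    linear_combination this
  have h2 : p * Polynomial.aeval p f ^ 2 = 1 := by
    have := congrArg (Polynomial.aeval p) hk
    simp [Matrix.aeval_self_charpoly] at this
    exact sub_eq_zero.1 this
  rcases (sq_eq_sq_iff_eq_or_eq_neg.1 (h1.trans (one_pow 2).symm)) with h | h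
  · exact ⟨f, h, h2⟩
  · exact ⟨-f, by simp [h], by simpa using h2⟩

lemma aux_intertwine {n : ℕ} (p q A : Matrix (Fin n) (Fin n) ℂ) (h : p * A = A * q)
    (f : Polynomial ℂ) : Polynomial.aeval p f * A = A * Polynomial.aeval q f := by
  induction f using Polynomial.induction_on with
  | C a => simp [Algebra.algebraMap_eq_smul_one]
  | add f g hf hg => simp [add_mul, mul_add, hf, hg]
  | monomial k a ih =>
    simp only [map_mul, map_pow, Polynomial.aeval_X, Polynomial.aeval_C,
      Algebra.algebraMap_eq_smul_one, smul_mul_assoc, one_mul, mul_smul_comm] at ih ⊢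
    have : ∀ j : ℕ, p ^ j * A = A * q ^ j := by
      intro j
      induction j with
      | zero => simp
      | succ j ihj => rw [pow_succ, pow_succ, mul_assoc, h, ← mul_assoc, ihj, mul_assoc]
    rw [this]

lemma aux_fix {n : ℕ} (p : Matrix (Fin n) (Fin n) ℂ) (x : Fin n → ℂ) (h : p *ᵥ x = x)
    (f : Polynomial ℂ) : Polynomial.aeval p f *ᵥ x = f.eval 1 • x := by
  induction f using Polynomial.induction_on with
  | C a => simp [Algebra.algebraMap_eq_smul_one, Matrix.smul_mulVec]
  | add f g hf hg => simp [Matrix.add_mulVec, hf, hg, add_smul]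
  | monomial k a ih =>
    have : ∀ j : ℕ, p ^ j *ᵥ x = x := by
      intro j
      induction j with
      | zero => simp
      | succ j ihj => rw [pow_succ, ← Matrix.mulVec_mulVec, h, ihj]
    simp [Algebra.algebraMap_eq_smul_one, Matrix.smul_mulVec, this]

lemma aux_transpose {n : ℕ} (p : Matrix (Fin n) (Fin n) ℂ) (f : Polynomial ℂ) :
    (Polynomial.aeval p f)ᵀ = Polynomial.aeval pᵀ f := by
  induction f using Polynomial.induction_on with
  | C a => simp [Algebra.algebraMap_eq_smul_one]
  | add f g hf hg => simp [hf, hg]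
  | monomial k a ih => simp [Algebra.algebraMap_eq_smul_one, Matrix.transpose_pow]

/-- Orbit embedding
`(ℂ^{2n} ⊕ Sym_n(ℂ) ⊕ Sym_n(ℂ))/GL_n(ℂ) ↪
 (ℂ^{2n} ⊕ (ℂ^{2n})* ⊕ M_n(ℂ) ⊕ M_n(ℂ))/(GL_n(ℂ) × GL_n(ℂ))`:
for symmetric `A, B, A′, B′ ∈ M_n(ℂ)` and `u, u′ ∈ ℂ^{2n}`, if `a, b ∈ GL_n(ℂ)`
satisfy `diag(a,b) u = u′`, `diag((bᵀ)⁻¹, (aᵀ)⁻¹) u = u′`, `a A b⁻¹ = A′` and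
`b B a⁻¹ = B′`, then there exists `c ∈ GL_n(ℂ)` with `diag(c, (cᵀ)⁻¹) u = u′`,
`c A cᵀ = A′` and `(cᵀ)⁻¹ B c⁻¹ = B′`. -/
theorem orbit_embedding_enhanced_theta_rep_typeCI (n : ℕ) (hn : 1 ≤ n)
    (u u' : (Fin n ⊕ Fin n) → ℂ)
    (A B A' B' : Matrix (Fin n) (Fin n) ℂ)
    (hA : Aᵀ = A) (hB : Bᵀ = B) (hA' : A'ᵀ = A') (hB' : B'ᵀ = B')
    (a b : Matrix (Fin n) (Fin n) ℂ) (ha : IsUnit a) (hb : IsUnit b)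
    (h1 : Matrix.fromBlocks a 0 0 b *ᵥ u = u')
    (h2 : Matrix.fromBlocks (bᵀ)⁻¹ 0 0 (aᵀ)⁻¹ *ᵥ u = u')
    (h3 : a * A * b⁻¹ = A') (h4 : b * B * a⁻¹ = B') :
    ∃ c : Matrix (Fin n) (Fin n) ℂ, IsUnit c ∧
      Matrix.fromBlocks c 0 0 (cᵀ)⁻¹ *ᵥ u = u' ∧
      c * A * cᵀ = A' ∧ (cᵀ)⁻¹ * B * c⁻¹ = B' := by
  have da := (Matrix.isUnit_iff_isUnit_det a).1 ha
  have db := (Matrix.isUnit_iff_isUnit_det b).1 hb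
  have daT : IsUnit aᵀ.det := by rwa [Matrix.det_transpose]
  have dbT : IsUnit bᵀ.det := by rwa [Matrix.det_transpose]
  obtain ⟨x, y, rfl⟩ : ∃ x y, u = Sum.elim x y := ⟨u ∘ Sum.inl, u ∘ Sum.inr, by simp⟩
  rw [Matrix.fromBlocks_mulVec] at h1 h2
  subst h1
  have e1 := congrArg (fun v => v ∘ Sum.inl) h2
  have e2 := congrArg (fun v => v ∘ Sum.inr) h2
  simp at e1 e2
  have hpx : (bᵀ * a) *ᵥ x = x := by
    rw [← Matrix.mulVec_mulVec, ← e1, Matrix.mulVec_mulVec, Matrix.mul_nonsing_inv _ dbT,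
      Matrix.one_mulVec]
  have hpy : (bᵀ * a)ᵀ *ᵥ y = y := by
    rw [Matrix.transpose_mul, Matrix.transpose_transpose, ← Matrix.mulVec_mulVec, ← e2,
      Matrix.mulVec_mulVec, Matrix.mul_nonsing_inv _ daT, Matrix.one_mulVec]
  have k3 : a * A = A' * b := by
    rw [← h3, Matrix.nonsing_inv_mul_cancel_right _ _ db]
  have k4 : b * B = B' * a := by
    rw [← h4, Matrix.nonsing_inv_mul_cancel_right _ _ da]
  have k3' : A * aᵀ = bᵀ * A' := by
    have := congrArg Matrix.transpose k3
    simpa [Matrix.transpose_mul, hA, hA'] using this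
  have k4' : B * bᵀ = aᵀ * B' := by
    have := congrArg Matrix.transpose k4
    simpa [Matrix.transpose_mul, hB, hB'] using this
  have hpA : (bᵀ * a) * A = A * (bᵀ * a)ᵀ := by
    rw [Matrix.transpose_mul, Matrix.transpose_transpose, ← mul_assoc, k3', mul_assoc, k3,
      mul_assoc]
  have hpB : (bᵀ * a)ᵀ * B = B * (bᵀ * a) := by
    rw [Matrix.transpose_mul, Matrix.transpose_transpose, ← mul_assoc, k4', mul_assoc, k4,
      mul_assoc]
  have hbT : IsUnit bᵀ := (Matrix.isUnit_iff_isUnit_det _).2 dbT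
  obtain ⟨f, hf1, hf2⟩ := aux_sqrt_mat (bᵀ * a) (hbT.mul ha)
  have qA := aux_intertwine _ _ _ hpA f
  have qB := aux_intertwine _ _ _ hpB f
  have qx := aux_fix _ _ hpx f
  have qy := aux_fix _ _ hpy f
  rw [← aux_transpose] at qA qB qy
  rw [hf1, one_smul] at qx qy
  generalize Polynomial.aeval (bᵀ * a) f = q at *
  -- `b q^T` is a left inverse of `(a q)^T` up to order
  have hq : (bᵀ * a * q) * q = 1 := by rw [mul_assoc, ← pow_two, hf2]
  have hq' : q * (bᵀ * a * q) = 1 := mul_eq_one_comm.1 hq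
  have hc1 : (q * bᵀ) * (a * q) = 1 := by
    rw [← hq']; simp only [mul_assoc]
  have hcinv : (a * q)⁻¹ = q * bᵀ := Matrix.inv_eq_left_inv hc1
  have hcT : ((a * q)ᵀ)⁻¹ = b * qᵀ := by
    rw [← Matrix.transpose_nonsing_inv, hcinv, Matrix.transpose_mul, Matrix.transpose_transpose]
  have hc2 : (a * q) * (q * bᵀ) = 1 := mul_eq_one_comm.1 hc1
  have hcu : IsUnit (a * q) := IsUnit.of_mul_eq_one _ hc2
  have hT : b * (qᵀ * qᵀ) * aᵀ = 1 := by
    have := congrArg Matrix.transpose hc2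
    simpa [Matrix.transpose_mul, mul_assoc] using this
  refine ⟨a * q, hcu, ?_, ?_, ?_⟩
  · rw [hcT, Matrix.fromBlocks_mulVec]
    simp [← Matrix.mulVec_mulVec, qx, qy]
  · calc a * q * A * (a * q)ᵀ = a * (q * A) * (qᵀ * aᵀ) := by
          rw [Matrix.transpose_mul]; simp only [mul_assoc]
      _ = (a * A) * (qᵀ * qᵀ * aᵀ) := by rw [qA]; simp only [mul_assoc]
      _ = A' * (b * (qᵀ * qᵀ) * aᵀ) := by rw [k3]; simp only [mul_assoc]
      _ = A' := by rw [hT, mul_one]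
  · rw [hcT, hcinv]
    calc b * qᵀ * B * (q * bᵀ) = b * (qᵀ * B) * (q * bᵀ) := by simp only [mul_assoc]
      _ = (b * B) * (q * (q * bᵀ)) := by rw [qB]; simp only [mul_assoc]
      _ = B' * ((a * q) * (q * bᵀ)) := by rw [k4]; simp only [mul_assoc]
      _ = B' := by rw [hc2, mul_one]
end

section
/- Let w, w′ ∈ ℂ^{n} and let A, B, A′, B′ ∈ M_n(ℂ) be symmetric matrices (Aᵀ = A, Bᵀ = B, A′ᵀ = A′, B′ᵀ = B′). Suppose there exist a, b ∈ GL_n(ℂ) such that a w = w′, (bᵀ)⁻¹ w = w′, a A b⁻¹ = A′ and b B a⁻¹ = B′. Then there exists c ∈ GL_n(ℂ) such that c w = w′, c A cᵀ = A′ and (cᵀ)⁻¹ B c⁻¹ = B′. This realizes the orbit embedding (ℂⁿ ⊕ Sym_n(ℂ) ⊕ Sym_n(ℂ))/GL_n(ℂ) ↪ (ℂⁿ ⊕ (ℂⁿ)* ⊕ M_n(ℂ) ⊕ M_n(ℂ))/(GL_n(ℂ) × GL_n(ℂ)). -/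
open Matrix

open Polynomial in
lemma aux_sqrt (S : Multiset ℂ) (hS : (0:ℂ) ∉ S) :
    ∃ p : ℂ[X], (S.map (fun a => X - C a)).prod ∣ p ^ 2 - X := by
  induction S using Multiset.induction_on with
  | empty => exact ⟨0, by simp⟩
  | cons l S ih =>
    rw [Multiset.mem_cons, not_or] at hS
    obtain ⟨p, s, hs⟩ := ih hS.2
    set q := (S.map (fun a => X - C a)).prod with hq
    have key : ∃ r : ℂ, s.eval l + 2 * p.eval l * r + q.eval l * r ^ 2 = 0 := by
      by_cases h : q.eval l = 0
      · have h0 : p.eval l ^ 2 - l = 0 := by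
          have := congrArg (eval l) hs
          simpa [h] using this
        have hp : p.eval l ≠ 0 := by
          intro h'
          rw [h'] at h0
          apply hS.1
          linear_combination h0
        refine ⟨-(s.eval l) / (2 * p.eval l), ?_⟩
        rw [h]; field_simp; ring
      · obtain ⟨t, ht⟩ := IsAlgClosed.exists_pow_nat_eq (p.eval l ^ 2 - q.eval l * s.eval l) (n := 2) (by norm_num)
        refine ⟨(t - p.eval l) / q.eval l, ?_⟩
        field_simp
        linear_combination ht
    obtain ⟨r, hr⟩ := key
    have hd : (X - C l) ∣ s + 2 * p * C r + q * C r ^ 2 := by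
      rw [dvd_iff_isRoot]
      simpa [IsRoot] using hr
    obtain ⟨u, hu⟩ := hd
    refine ⟨p + q * C r, u, ?_⟩
    rw [Multiset.map_cons, Multiset.prod_cons, ← hq]
    linear_combination hs + q * hu

open Polynomial in
lemma aux_mat {n : ℕ} (g : Matrix (Fin n) (Fin n) ℂ) (hg : IsUnit g) :
    ∃ p : ℂ[X], (aeval g p) ^ 2 = g ∧ p.eval 1 = 1 := by
  have h0 : (0:ℂ) ∉ (1 ::ₘ g.charpoly.roots) := by
    rw [Multiset.mem_cons, not_or]
    refine ⟨by norm_num, fun h => ?_⟩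
    have h := isRoot_of_mem_roots h
    rw [IsRoot, Matrix.eval_charpoly] at h
    rw [Matrix.isUnit_iff_isUnit_det] at hg
    apply hg.ne_zero
    simpa [Matrix.det_neg] using h
  obtain ⟨p, u, hu⟩ := aux_sqrt _ h0
  have hs : (g.charpoly.roots.map (fun a => X - C a)).prod = g.charpoly :=
    ((IsAlgClosed.splits g.charpoly).eq_prod_roots_of_monic g.charpoly_monic).symm
  rw [Multiset.map_cons, Multiset.prod_cons, hs] at hu
  have e1 : aeval g p ^ 2 = g := by
    have := congrArg (aeval g) hu
    simp only [map_sub, map_mul, map_pow, aeval_X, Matrix.aeval_self_charpoly, mul_zero, zero_mul] at this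
    exact sub_eq_zero.mp this
  have e2 : p.eval 1 ^ 2 = 1 := by
    have := congrArg (eval 1) hu
    simp at this
    linear_combination this
  rcases (mul_self_eq_one_iff.mp (by rw [← pow_two]; exact e2) : p.eval 1 = 1 ∨ p.eval 1 = -1) with h | h
  · exact ⟨p, e1, h⟩
  · exact ⟨-p, by simpa using e1, by simp [h]⟩

open Polynomial in
lemma aux_intertwine_s8 {n : ℕ} (g k M : Matrix (Fin n) (Fin n) ℂ) (h : g * M = M * k) (p : ℂ[X]) :
    aeval g p * M = M * aeval k p := by
  induction p using Polynomial.induction_on' with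
  | add p q hp hq => simp [add_mul, mul_add, hp, hq]
  | monomial m c =>
    have : ∀ m : ℕ, g ^ m * M = M * k ^ m := by
      intro m
      induction m with
      | zero => simp
      | succ m ih => rw [pow_succ, mul_assoc, h, ← mul_assoc, ih, mul_assoc, pow_succ]
    simp [aeval_monomial, Algebra.algebraMap_eq_smul_one, this]

open Polynomial in
lemma aux_transpose_s8 {n : ℕ} (g : Matrix (Fin n) (Fin n) ℂ) (p : ℂ[X]) :
    (aeval g p)ᵀ = aeval gᵀ p := by
  induction p using Polynomial.induction_on' with
  | add p q hp hq => simp [hp, hq]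
  | monomial m c => simp [aeval_monomial, Algebra.algebraMap_eq_smul_one, transpose_pow]

open Polynomial in
lemma aux_vec {n : ℕ} (g : Matrix (Fin n) (Fin n) ℂ) (w : Fin n → ℂ) (h : g *ᵥ w = w) (p : ℂ[X]) :
    aeval g p *ᵥ w = p.eval 1 • w := by
  induction p using Polynomial.induction_on' with
  | add p q hp hq => simp [add_mulVec, add_smul, hp, hq]
  | monomial m c =>
    have : ∀ m : ℕ, g ^ m *ᵥ w = w := by
      intro m
      induction m with
      | zero => simp
      | succ m ih => rw [pow_succ, ← mulVec_mulVec, h, ih]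
    simp [aeval_monomial, Algebra.algebraMap_eq_smul_one, smul_mulVec, this]

/-- Orbit embedding
`(ℂⁿ ⊕ Sym_n(ℂ) ⊕ Sym_n(ℂ))/GL_n(ℂ) ↪
 (ℂⁿ ⊕ (ℂⁿ)* ⊕ M_n(ℂ) ⊕ M_n(ℂ))/(GL_n(ℂ) × GL_n(ℂ))`:
for symmetric `A, B, A′, B′ ∈ M_n(ℂ)` and `w, w′ ∈ ℂⁿ`, if `a, b ∈ GL_n(ℂ)`
satisfy `a w = w′`, `(bᵀ)⁻¹ w = w′`, `a A b⁻¹ = A′` and `b B a⁻¹ = B′`, then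
there exists `c ∈ GL_n(ℂ)` with `c w = w′`, `c A cᵀ = A′` and
`(cᵀ)⁻¹ B c⁻¹ = B′`. -/
theorem orbit_embedding_enhanced_Kronecker_quiver (n : ℕ) (hn : 1 ≤ n)
    (w w' : Fin n → ℂ)
    (A B A' B' : Matrix (Fin n) (Fin n) ℂ)
    (hA : Aᵀ = A) (hB : Bᵀ = B) (hA' : A'ᵀ = A') (hB' : B'ᵀ = B')
    (a b : Matrix (Fin n) (Fin n) ℂ) (ha : IsUnit a) (hb : IsUnit b)
    (h1 : a *ᵥ w = w') (h2 : (bᵀ)⁻¹ *ᵥ w = w')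
    (h3 : a * A * b⁻¹ = A') (h4 : b * B * a⁻¹ = B') :
    ∃ c : Matrix (Fin n) (Fin n) ℂ, IsUnit c ∧
      c *ᵥ w = w' ∧ c * A * cᵀ = A' ∧ (cᵀ)⁻¹ * B * c⁻¹ = B' := by
  -- replace `b` by `d = (bᵀ)⁻¹`
  obtain ⟨d, hd, rfl⟩ : ∃ d : Matrix (Fin n) (Fin n) ℂ, IsUnit d ∧ b = (dᵀ)⁻¹ := by
    have hbT : IsUnit bᵀ := (isUnit_transpose b).mpr hb
    refine ⟨(bᵀ)⁻¹, (Matrix.isUnit_nonsing_inv_iff).mpr hbT, ?_⟩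
    rw [transpose_nonsing_inv, transpose_transpose, nonsing_inv_nonsing_inv]
    exact (Matrix.isUnit_iff_isUnit_det _).mp hb
  have hd' := (Matrix.isUnit_iff_isUnit_det _).mp hd
  have ha' := (Matrix.isUnit_iff_isUnit_det _).mp ha
  have hdT : IsUnit dᵀ.det := by rwa [det_transpose]
  have haT : IsUnit aᵀ.det := by rwa [det_transpose]
  rw [transpose_nonsing_inv, transpose_transpose, nonsing_inv_nonsing_inv _ hd'] at h2
  rw [nonsing_inv_nonsing_inv _ hdT] at h3
  have h4' : B = dᵀ * B' * a := by
    rw [← h4, mul_assoc, mul_assoc, nonsing_inv_mul _ ha', mul_one, ← mul_assoc,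
      mul_nonsing_inv _ hdT, one_mul]
  have h3T : d * A * aᵀ = A' := by
    rw [← hA', ← h3]; simp [hA, mul_assoc]
  have h4T : B = aᵀ * B' * d := by
    rw [← hB]
    conv_lhs => rw [h4']
    simp [hB', mul_assoc]
  obtain ⟨g, hg, rfl⟩ : ∃ g, IsUnit g ∧ a = d * g :=
    ⟨d⁻¹ * a, ((Matrix.isUnit_nonsing_inv_iff).mpr hd).mul ha, by
      rw [← mul_assoc, mul_nonsing_inv _ hd', one_mul]⟩
  have hgw : g *ᵥ w = w := by
    have : d *ᵥ (g *ᵥ w) = d *ᵥ w := by rw [mulVec_mulVec, h1, h2]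
    exact mulVec_injective_of_isUnit hd this
  have hgA : g * A = A * gᵀ := by
    have e : d * (g * A) * dᵀ = d * (A * gᵀ) * dᵀ := by
      rw [← mul_assoc, h3, ← h3T]; simp [mul_assoc]
    exact hd.mul_left_cancel (((isUnit_transpose d).mpr hd).mul_right_cancel e)
  have hgB : gᵀ * B = B * g := by
    conv_lhs => rw [h4']
    conv_rhs => rw [h4T]
    simp [mul_assoc]
  obtain ⟨p, hp, hp1⟩ := aux_mat g hg
  have kA := aux_intertwine_s8 _ _ _ hgA p
  have kB := aux_intertwine_s8 _ _ _ hgB p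
  have kw := aux_vec _ _ hgw p
  have kc := aux_intertwine_s8 g g g rfl p
  rw [← aux_transpose_s8] at kA kB
  rw [hp1, one_smul] at kw
  generalize Polynomial.aeval g p = h at *
  have hh : IsUnit h := by
    rw [← hp] at hg
    exact (isUnit_pow_iff two_ne_zero).mp hg
  have hc : IsUnit (d * h) := hd.mul hh
  have hc' := (Matrix.isUnit_iff_isUnit_det _).mp hc
  have hcT : IsUnit (d * h)ᵀ.det := by rwa [det_transpose]
  refine ⟨d * h, hc, ?_, ?_, ?_⟩
  · rw [← mulVec_mulVec, kw, h2]
  · rw [← h3, ← hp, transpose_mul]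
    simp only [mul_assoc, pow_two]
    rw [← mul_assoc A, ← kA]
    simp only [mul_assoc]
  · have e : B = (d * h)ᵀ * B' * (d * h) := by
      apply hh.mul_right_cancel
      rw [← kB]
      conv_lhs => rw [h4', ← hp]
      simp [mul_assoc, pow_two]
    rw [e, mul_assoc, mul_assoc, mul_nonsing_inv _ hc', mul_one, ← mul_assoc,
      nonsing_inv_mul _ hcT, one_mul]
end

section
/- Every polynomial function F on ℂ^{2n} × ℂ^{2n} × M_{2n}(ℂ) (polynomial in the coordinates of v, the coordinates of ξ, and the entries of A) that satisfies F(g v, ξ g⁻¹, g A g⁻¹) = F(v, ξ, A) for all g ∈ GL_{2n}(ℂ) belongs to the ℂ-subalgebra of functions generated by the trace functions (v, ξ, A) ↦ tr(A^k) for k ≥ 1 together with the functions Γ_k(v, ξ, A) = ξ A^k v for k ≥ 0. -/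
open Matrix

/-- The space `V ⊕ V* ⊕ gl_{2n}(ℂ)` with `V = ℂ^{2n}` indexed by `Fin n ⊕ Fin n`:
a point is a triple (vector `v`, covector `ξ`, matrix `A`). -/
abbrev EnhPt (n : ℕ) :=
  ((Fin n ⊕ Fin n) → ℂ) × ((Fin n ⊕ Fin n) → ℂ) ×
    Matrix (Fin n ⊕ Fin n) (Fin n ⊕ Fin n) ℂ

/-- The coordinate functions on `V ⊕ V* ⊕ gl_{2n}(ℂ)`: the coordinates of `v`,
the coordinates of `ξ`, and the entries of `A`.  Polynomial functions are the
elements of the ℂ-subalgebra they generate. -/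
def coordFns (n : ℕ) : Set (EnhPt n → ℂ) :=
  {f | ∃ i, f = fun p => p.1 i} ∪ {f | ∃ i, f = fun p => p.2.1 i} ∪
    {f | ∃ i j, f = fun p => p.2.2 i j}

/-- Generators of the invariants: the trace functions `tr(A^k)` for `k ≥ 1`
together with `Γ_k(v, ξ, A) = ξ A^k v` for `k ≥ 0`. -/
def invGens (n : ℕ) : Set (EnhPt n → ℂ) :=
  {f | ∃ k : ℕ, 1 ≤ k ∧ f = fun p => (p.2.2 ^ k).trace} ∪
    {f | ∃ k : ℕ, f = fun p => p.2.1 ⬝ᵥ ((p.2.2 ^ k) *ᵥ p.1)}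

namespace EnhAux

theorem det_aeval_eq {m : Type*} [Fintype m] [DecidableEq m] (A : Matrix m m ℂ)
    (q : Polynomial ℂ) :
    (Polynomial.aeval A q).det = (A.charpoly.roots.map (fun l => q.eval l)).prod := by
  have hcard : Multiset.card A.charpoly.roots = Fintype.card m := by
    rw [← A.charpoly_natDegree_eq_dim]
    exact (IsAlgClosed.splits A.charpoly).natDegree_eq_card_roots.symm
  have hlin : ∀ μ : ℂ, (Polynomial.aeval A (Polynomial.X - Polynomial.C μ)).det
      = (A.charpoly.roots.map (fun l => (Polynomial.X - Polynomial.C μ).eval l)).prod := by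
    intro μ
    have h1 : A.charpoly.eval μ = (A.charpoly.roots.map (fun l => μ - l)).prod := by
      conv_lhs => rw [(IsAlgClosed.splits A.charpoly).eq_prod_roots_of_monic A.charpoly_monic]
      rw [Polynomial.eval_multiset_prod, Multiset.map_map]
      simp
    rw [Matrix.eval_charpoly] at h1
    have h2 : Polynomial.aeval A (Polynomial.X - Polynomial.C μ) = -(Matrix.scalar m μ - A) := by
      simp [Matrix.algebraMap_eq_diagonal, Pi.algebraMap_def]
    rw [h2, Matrix.det_neg, h1, ← hcard]
    have : (fun l => (Polynomial.X - Polynomial.C μ).eval l) = fun l : ℂ => (-1) * (μ - l) := by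
      funext l; simp
    rw [this, Multiset.prod_map_mul]
    simp
  have hsp := IsAlgClosed.splits q
  have hq := hsp.eq_prod_roots
  rw [hq]
  generalize q.leadingCoeff = c
  generalize q.roots = s
  induction s using Multiset.induction_on with
  | empty =>
    simp [Matrix.algebraMap_eq_diagonal, hcard]
  | cons a s ih =>
    rw [Multiset.map_cons, Multiset.prod_cons, mul_left_comm, map_mul, Matrix.det_mul, ih, hlin,
      ← Multiset.prod_map_mul]
    simp

theorem trace_pow_eq {m : Type*} [Fintype m] [DecidableEq m] (A : Matrix m m ℂ) (k : ℕ) :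
    (A ^ k).trace = (A.charpoly.roots.map (fun l => l ^ k)).sum := by
  have h : (A ^ k).charpoly
      = ((A.charpoly.roots.map (fun l => l ^ k)).map (fun a => Polynomial.X - Polynomial.C a)).prod := by
    apply Polynomial.funext
    intro r
    rw [Matrix.eval_charpoly, Polynomial.eval_multiset_prod]
    have := det_aeval_eq A (Polynomial.C r - Polynomial.X ^ k)
    simp only [map_sub, Polynomial.aeval_C, map_pow, Polynomial.aeval_X] at this
    simp only [Multiset.map_map, Function.comp_def]
    simpa [Matrix.algebraMap_eq_diagonal, Pi.algebraMap_def] using this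
  rw [Matrix.trace_eq_sum_roots_charpoly, h, Polynomial.roots_multiset_prod_X_sub_C]

theorem newton (s : Multiset ℂ) (k : ℕ) :
    (k : ℂ) * s.esymm k = (-1) ^ (k + 1) *
      ∑ a ∈ Finset.HasAntidiagonal.antidiagonal k with a.1 < k,
        (-1) ^ a.1 * s.esymm a.1 * (s.map (fun l => l ^ a.2)).sum := by
  obtain ⟨l, rfl⟩ := Quot.exists_rep s
  have hs : (Finset.univ : Finset (Fin l.length)).val.map l.get = (l : Multiset ℂ) := by
    simp
  have hN := congrArg (MvPolynomial.aeval l.get) (MvPolynomial.mul_esymm_eq_sum (Fin l.length) ℂ k)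
  simp only [map_mul, map_natCast, map_pow, map_neg, map_one, map_sum,
    MvPolynomial.aeval_esymm_eq_multiset_esymm, MvPolynomial.psum, MvPolynomial.aeval_X, hs] at hN
  change (k : ℂ) * Multiset.esymm (l : Multiset ℂ) k = _
  rw [hN]
  congr 1
  refine Finset.sum_congr rfl fun a _ => ?_
  congr 1
  change _ = (Multiset.map (fun x => x ^ a.2) (l : Multiset ℂ)).sum
  rw [← hs, Multiset.map_map]
  rfl

theorem esymm_mem (n k : ℕ) : (fun p : EnhPt n => p.2.2.charpoly.roots.esymm k) ∈
    Algebra.adjoin ℂ (invGens n) := by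
  induction k using Nat.strong_induction_on with
  | _ k ih =>
    rcases Nat.eq_zero_or_pos k with rfl | hk
    · convert (Algebra.adjoin ℂ (invGens n)).one_mem using 1
      funext p
      simp [Multiset.esymm]
    · have : (fun p : EnhPt n => p.2.2.charpoly.roots.esymm k) =
          ((k : ℂ)⁻¹ * (-1) ^ (k + 1)) • ∑ a ∈ Finset.HasAntidiagonal.antidiagonal k with a.1 < k,
            (((-1 : ℂ) ^ a.1) • (fun p : EnhPt n => p.2.2.charpoly.roots.esymm a.1)) *
              (fun p : EnhPt n => (p.2.2 ^ a.2).trace) := by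
        funext p
        have hk' : (k : ℂ) ≠ 0 := by exact_mod_cast hk.ne'
        have := newton p.2.2.charpoly.roots k
        simp only [← trace_pow_eq] at this
        simp only [Pi.smul_apply, Finset.sum_apply, Pi.mul_apply, smul_eq_mul]
        rw [mul_assoc, ← this]
        field_simp
      rw [this]
      refine Subalgebra.smul_mem _ (Subalgebra.sum_mem _ fun a ha => ?_) _
      simp only [Finset.mem_filter, Finset.HasAntidiagonal.mem_antidiagonal] at ha
      refine Subalgebra.mul_mem _ (Subalgebra.smul_mem _ (ih _ ha.2) _) ?_
      exact Algebra.subset_adjoin (Or.inl ⟨a.2, by omega, rfl⟩)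

theorem coeff_mem (n k : ℕ) (hk : k ≤ n + n) : (fun p : EnhPt n => p.2.2.charpoly.coeff k) ∈
    Algebra.adjoin ℂ (invGens n) := by
  have : (fun p : EnhPt n => p.2.2.charpoly.coeff k) =
      ((-1 : ℂ) ^ (n + n - k)) • (fun p : EnhPt n => p.2.2.charpoly.roots.esymm (n + n - k)) := by
    funext p
    have hd : p.2.2.charpoly.natDegree = n + n := by
      rw [Matrix.charpoly_natDegree_eq_dim]; simp
    have := Polynomial.coeff_eq_esymm_roots_of_splits (IsAlgClosed.splits p.2.2.charpoly)
      (k := k) (by omega)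
    rw [this, hd, p.2.2.charpoly_monic.leadingCoeff]
    simp
  rw [this]
  exact Subalgebra.smul_mem _ (esymm_mem n _) _

/-- Krylov matrix -/
def Kry (n : ℕ) (p : EnhPt n) : Matrix (Fin n ⊕ Fin n) (Fin n ⊕ Fin n) ℂ :=
  Matrix.of fun i j => ((p.2.2 ^ (finSumFinEquiv j : ℕ)) *ᵥ p.1) i

/-- Companion matrix -/
noncomputable def Cmp (n : ℕ) (p : EnhPt n) : Matrix (Fin n ⊕ Fin n) (Fin n ⊕ Fin n) ℂ :=
  Matrix.of fun i j => if (finSumFinEquiv j : ℕ) + 1 < n + n then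
    (if (finSumFinEquiv i : ℕ) = (finSumFinEquiv j : ℕ) + 1 then 1 else 0)
    else - p.2.2.charpoly.coeff (finSumFinEquiv i : ℕ)

/-- Normal form -/
noncomputable def Nf (n : ℕ) (p : EnhPt n) : EnhPt n :=
  (fun i => if (finSumFinEquiv i : ℕ) = 0 then 1 else 0,
   fun j => p.2.1 ⬝ᵥ ((p.2.2 ^ (finSumFinEquiv j : ℕ)) *ᵥ p.1),
   Cmp n p)

theorem sum_ite_aux (n : ℕ) (f : ℕ → ℂ) (k : ℕ) (hk : k < n + n) :
    ∑ j : Fin n ⊕ Fin n, f (finSumFinEquiv j : ℕ) *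
      (if (finSumFinEquiv j : ℕ) = k then 1 else 0) = f k := by
  rw [Equiv.sum_comp finSumFinEquiv
    (fun j : Fin (n + n) => f (j : ℕ) * (if (j : ℕ) = k then 1 else 0)),
    Fin.sum_univ_eq_sum_range (fun j => f j * (if j = k then 1 else 0)) (n + n)]
  simp [hk]

theorem Kry_e (n : ℕ) (hn : 1 ≤ n) (p : EnhPt n) : Kry n p *ᵥ (Nf n p).1 = p.1 := by
  funext i
  simp only [Matrix.mulVec, dotProduct, Kry, Nf, Matrix.of_apply]
  have := sum_ite_aux n (fun k => ((p.2.2 ^ k) *ᵥ p.1) i) 0 (by omega)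
  simp only [Matrix.mulVec, dotProduct] at this
  rw [this]
  simp [Matrix.one_apply]

theorem vec_Kry (n : ℕ) (p : EnhPt n) : p.2.1 ᵥ* Kry n p = (Nf n p).2.1 := by
  funext j
  simp [Matrix.vecMul, dotProduct, Kry, Nf]

theorem pow_eq (n : ℕ) (A : Matrix (Fin n ⊕ Fin n) (Fin n ⊕ Fin n) ℂ) :
    A ^ (n + n) = - ∑ k ∈ Finset.range (n + n), A.charpoly.coeff k • A ^ k := by
  have h := Matrix.aeval_self_charpoly A
  have hd : A.charpoly.natDegree = n + n := by
    rw [Matrix.charpoly_natDegree_eq_dim]; simp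
  have h1 : A.charpoly.coeff (n + n) = 1 := by
    rw [← hd]; exact A.charpoly_monic.coeff_natDegree
  rw [Polynomial.aeval_eq_sum_range, hd, Finset.sum_range_succ, h1, one_smul] at h
  exact eq_neg_of_add_eq_zero_right h

theorem Kry_Cmp (n : ℕ) (p : EnhPt n) : Kry n p * Cmp n p = p.2.2 * Kry n p := by
  ext i j
  have hR : (p.2.2 * Kry n p) i j = ((p.2.2 ^ ((finSumFinEquiv j : ℕ) + 1)) *ᵥ p.1) i := by
    rw [pow_succ', ← Matrix.mulVec_mulVec]
    simp [Matrix.mul_apply, Kry, Matrix.mulVec, dotProduct]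
  rw [hR, Matrix.mul_apply]
  by_cases h : (finSumFinEquiv j : ℕ) + 1 < n + n
  · simp only [Cmp, Kry, Matrix.of_apply, if_pos h]
    exact sum_ite_aux n (fun k => ((p.2.2 ^ k) *ᵥ p.1) i) _ h
  · have hj : (finSumFinEquiv j : ℕ) + 1 = n + n := by
      have := (finSumFinEquiv j).isLt
      omega
    simp only [Cmp, Kry, Matrix.of_apply, if_neg h]
    rw [hj, pow_eq, Equiv.sum_comp finSumFinEquiv (fun j : Fin (n + n) =>
      ((p.2.2 ^ (j : ℕ)) *ᵥ p.1) i * -p.2.2.charpoly.coeff (j : ℕ)),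
      Fin.sum_univ_eq_sum_range (fun j =>
      ((p.2.2 ^ j) *ᵥ p.1) i * -p.2.2.charpoly.coeff j) (n + n)]
    simp [Matrix.neg_mulVec, Matrix.sum_mulVec, Matrix.smul_mulVec, mul_comm]

theorem Nf_mem (n : ℕ) (F : EnhPt n → ℂ) (hF : F ∈ Algebra.adjoin ℂ (coordFns n)) :
    (fun p => F (Nf n p)) ∈ Algebra.adjoin ℂ (invGens n) := by
  induction hF using Algebra.adjoin_induction with
  | mem f hf =>
    rcases hf with (⟨i, rfl⟩ | ⟨i, rfl⟩) | ⟨i, j, rfl⟩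
    · exact (Algebra.adjoin ℂ (invGens n)).algebraMap_mem
        (if (finSumFinEquiv i : ℕ) = 0 then 1 else 0)
    · exact Algebra.subset_adjoin (Or.inr ⟨_, rfl⟩)
    · simp only [Nf, Cmp, Matrix.of_apply]
      split_ifs
      · exact Subalgebra.one_mem _
      · exact Subalgebra.zero_mem _
      · exact Subalgebra.neg_mem _ (coeff_mem n _ (finSumFinEquiv i).isLt.le)
  | algebraMap r => exact (Algebra.adjoin ℂ (invGens n)).algebraMap_mem r
  | add f g _ _ hf hg => exact Subalgebra.add_mem _ hf hg
  | mul f g _ _ hf hg => exact Subalgebra.mul_mem _ hf hg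

theorem fsum_mem {X ι : Type*} (S : Subalgebra ℂ (X → ℂ)) (s : Finset ι) (f : ι → X → ℂ)
    (h : ∀ i ∈ s, f i ∈ S) : (fun p => ∑ i ∈ s, f i p) ∈ S := by
  have := S.sum_mem h
  convert this using 1
  funext p
  simp

theorem pow_entry_mem (n k : ℕ) (i j : Fin n ⊕ Fin n) :
    (fun p : EnhPt n => (p.2.2 ^ k) i j) ∈ Algebra.adjoin ℂ (coordFns n) := by
  induction k generalizing i j with
  | zero =>
    simp only [pow_zero]
    exact (Algebra.adjoin ℂ (coordFns n)).algebraMap_mem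
        ((1 : Matrix (Fin n ⊕ Fin n) (Fin n ⊕ Fin n) ℂ) i j)
  | succ k ih =>
    simp only [pow_succ, Matrix.mul_apply]
    exact fsum_mem _ _ _ fun l _ => Subalgebra.mul_mem _ (ih i l)
      (Algebra.subset_adjoin (Or.inr ⟨l, j, rfl⟩))

theorem pow_vec_mem (n k : ℕ) (i : Fin n ⊕ Fin n) :
    (fun p : EnhPt n => ((p.2.2 ^ k) *ᵥ p.1) i) ∈ Algebra.adjoin ℂ (coordFns n) := by
  simp only [Matrix.mulVec, dotProduct]
  exact fsum_mem _ _ _ fun l _ => Subalgebra.mul_mem _ (pow_entry_mem n k i l)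
      (Algebra.subset_adjoin (Or.inl (Or.inl ⟨l, rfl⟩)))

theorem inv_le (n : ℕ) : Algebra.adjoin ℂ (invGens n) ≤ Algebra.adjoin ℂ (coordFns n) := by
  refine Algebra.adjoin_le ?_
  rintro f (⟨k, _, rfl⟩ | ⟨k, rfl⟩)
  · exact fsum_mem _ _ _ fun i _ => pow_entry_mem n k i i
  · exact fsum_mem _ _ _ fun i _ => Subalgebra.mul_mem _
      (Algebra.subset_adjoin (Or.inl (Or.inr ⟨i, rfl⟩))) (pow_vec_mem n k i)

theorem det_mem (n : ℕ) :
    (fun p : EnhPt n => (Kry n p).det) ∈ Algebra.adjoin ℂ (coordFns n) := by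
  simp only [Matrix.det_apply']
  refine fsum_mem _ _ _ fun σ _ => Subalgebra.mul_mem _
    ((Algebra.adjoin ℂ (coordFns n)).algebraMap_mem ((Equiv.Perm.sign σ : ℤ) : ℂ)) ?_
  have := (Algebra.adjoin ℂ (coordFns n)).prod_mem (t := Finset.univ)
    (f := fun (i : Fin n ⊕ Fin n) (p : EnhPt n) => Kry n p (σ i) i)
    fun i _ => pow_vec_mem n _ (σ i)
  convert this using 1
  funext p
  simp

theorem line (n : ℕ) (f : EnhPt n → ℂ) (hf : f ∈ Algebra.adjoin ℂ (coordFns n))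
    (p q : EnhPt n) : ∃ P : Polynomial ℂ, ∀ t : ℂ, f (p + t • q) = P.eval t := by
  induction hf using Algebra.adjoin_induction with
  | mem f hf =>
    rcases hf with (⟨i, rfl⟩ | ⟨i, rfl⟩) | ⟨i, j, rfl⟩
    · exact ⟨Polynomial.C (p.1 i) + Polynomial.X * Polynomial.C (q.1 i), fun t => by simp; ring⟩
    · exact ⟨Polynomial.C (p.2.1 i) + Polynomial.X * Polynomial.C (q.2.1 i), fun t => by simp; ring⟩
    · exact ⟨Polynomial.C (p.2.2 i j) + Polynomial.X * Polynomial.C (q.2.2 i j),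
        fun t => by simp; ring⟩
  | algebraMap r => exact ⟨Polynomial.C r, fun t => by simp⟩
  | add f g _ _ hf hg =>
    obtain ⟨P, hP⟩ := hf
    obtain ⟨Q, hQ⟩ := hg
    exact ⟨P + Q, fun t => by simp [hP, hQ]⟩
  | mul f g _ _ hf hg =>
    obtain ⟨P, hP⟩ := hf
    obtain ⟨Q, hQ⟩ := hg
    exact ⟨P * Q, fun t => by simp [hP, hQ]⟩

theorem exists_cyclic (n : ℕ) : ∃ q : EnhPt n, (Kry n q).det ≠ 0 := by
  refine ⟨(fun _ => 1, 0, Matrix.diagonal fun i => ((finSumFinEquiv i : ℕ) : ℂ)), ?_⟩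
  have : Kry n (fun _ => 1, 0, Matrix.diagonal fun i => ((finSumFinEquiv i : ℕ) : ℂ)) =
      (Matrix.vandermonde (fun i : Fin (n + n) => ((i : ℕ) : ℂ))).submatrix
        finSumFinEquiv finSumFinEquiv := by
    ext i j
    simp [Kry, Matrix.diagonal_pow, Matrix.mulVec_diagonal, Matrix.vandermonde_apply,
      Matrix.mulVec, dotProduct, Matrix.diagonal_apply]
  rw [this, Matrix.det_submatrix_equiv_self, Matrix.det_vandermonde_ne_zero_iff]
  intro a b h
  exact Fin.ext (Nat.cast_injective (R := ℂ) h)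

end EnhAux

/-- Every polynomial function `F` on `V ⊕ V* ⊕ gl_{2n}(ℂ)` invariant under
`g·(v, ξ, A) = (g v, ξ g⁻¹, g A g⁻¹)` for all `g ∈ GL_{2n}(ℂ)` lies in the
ℂ-subalgebra generated by the traces `tr(A^k)` (`k ≥ 1`) and the functions
`Γ_k(v, ξ, A) = ξ A^k v` (`k ≥ 0`). -/
theorem GL_invariants_enhanced (n : ℕ) (hn : 1 ≤ n) (F : EnhPt n → ℂ)
    (hpoly : F ∈ Algebra.adjoin ℂ (coordFns n))
    (hinv : ∀ g : Matrix (Fin n ⊕ Fin n) (Fin n ⊕ Fin n) ℂ, IsUnit g →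
      ∀ p : EnhPt n, F (g *ᵥ p.1, p.2.1 ᵥ* g⁻¹, g * p.2.2 * g⁻¹) = F p) :
    F ∈ Algebra.adjoin ℂ (invGens n) := by
  have hG := EnhAux.Nf_mem n F hpoly
  have key : ∀ p, (EnhAux.Kry n p).det ≠ 0 → F p = F (EnhAux.Nf n p) := by
    intro p hp
    have hu : IsUnit (EnhAux.Kry n p).det := isUnit_iff_ne_zero.mpr hp
    rw [← hinv _ ((Matrix.isUnit_iff_isUnit_det _).mpr hu) (EnhAux.Nf n p),
      EnhAux.Kry_e n hn, ← EnhAux.vec_Kry, Matrix.vecMul_vecMul, Matrix.mul_nonsing_inv _ hu,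
      Matrix.vecMul_one]
    have : EnhAux.Kry n p * (EnhAux.Nf n p).2.2 = p.2.2 * EnhAux.Kry n p := EnhAux.Kry_Cmp n p
    rw [this, Matrix.mul_assoc, Matrix.mul_nonsing_inv _ hu, Matrix.mul_one]
  have hEq : F = fun p => F (EnhAux.Nf n p) := by
    funext p
    obtain ⟨q, hq⟩ := EnhAux.exists_cyclic n
    obtain ⟨D, hD⟩ := EnhAux.line n _ (EnhAux.det_mem n) p (q - p)
    obtain ⟨P, hP⟩ := EnhAux.line n _ (Subalgebra.sub_mem _ hpoly (EnhAux.inv_le n hG)) p (q - p)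
    have hD0 : D ≠ 0 := by
      rintro rfl
      have := hD 1
      simp at this
      exact hq this
    have hPD : P * D = 0 := by
      apply Polynomial.funext
      intro t
      rw [Polynomial.eval_mul, ← hP, ← hD, Polynomial.eval_zero]
      by_cases h : (EnhAux.Kry n (p + t • (q - p))).det = 0
      · simp only [h, mul_zero]
      · simp only [Pi.sub_apply, key _ h, sub_self, zero_mul]
    have hP0 : P = 0 := (mul_eq_zero.mp hPD).resolve_right hD0
    have := hP 0
    simp only [hP0, zero_smul, add_zero, Polynomial.eval_zero, Pi.sub_apply] at this
    exact sub_eq_zero.mp this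
  rw [hEq]
  exact hG
end

section
/- Every polynomial function f on ℂ^{2n} × sp_{2n}(ℂ) satisfying f(g v, g A g⁻¹) = f(v, A) for all g ∈ Sp_{2n}(ℂ) lies in the quotient field of the ℂ-subalgebra generated by the Sp_{2n}(ℂ)-invariant polynomial functions depending only on the sp_{2n}(ℂ)-component A together with the functions γ_k(v, A) = vᵀ J A^k v for odd k ≥ 1: there exist functions p, q in that subalgebra with q not identically zero such that q·f = p as functions on ℂ^{2n} × sp_{2n}(ℂ). -/
open Matrix

/-- The symplectic group, as the set `{g : gᵀ J g = J}`. -/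
noncomputable def SpSet (n : ℕ) : Set (Matrix (Fin n ⊕ Fin n) (Fin n ⊕ Fin n) ℂ) :=
  {g | gᵀ * J n * g = J n}

/-- Points of the ambient space `ℂ^{2n} × M_{2n}(ℂ)` containing
`ℂ^{2n} ⊕ sp_{2n}(ℂ)`. -/
abbrev EnhPt2 (n : ℕ) :=
  ((Fin n ⊕ Fin n) → ℂ) × Matrix (Fin n ⊕ Fin n) (Fin n ⊕ Fin n) ℂ

/-- Coordinate functions; polynomial functions are the elements of the
ℂ-subalgebra they generate. -/
def coordFns2 (n : ℕ) : Set (EnhPt2 n → ℂ) :=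
  {f | ∃ i, f = fun p => p.1 i} ∪ {f | ∃ i j, f = fun p => p.2 i j}

/-- Polynomial functions on `ℂ^{2n} × M_{2n}(ℂ)`. -/
noncomputable def polyFns2 (n : ℕ) : Subalgebra ℂ (EnhPt2 n → ℂ) :=
  Algebra.adjoin ℂ (coordFns2 n)

/-- Generators: `Sp_{2n}(ℂ)`-invariant polynomial functions depending only on the
`sp_{2n}(ℂ)`-component, together with `γ_k(v, A) = vᵀ J A^k v` for odd `k`. -/
def spInvGens (n : ℕ) : Set (EnhPt2 n → ℂ) :=
  {h | h ∈ polyFns2 n ∧ (∀ v v' A, h (v, A) = h (v', A)) ∧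
    (∀ g ∈ SpSet n, ∀ v, ∀ A ∈ spLie n, h (g *ᵥ v, g * A * g⁻¹) = h (v, A))} ∪
  {h | ∃ k : ℕ, Odd k ∧ h = fun p => p.1 ⬝ᵥ ((J n * p.2 ^ k) *ᵥ p.1)}

namespace SpAux

/-- index to exponent -/
def ex {n : ℕ} : Fin n ⊕ Fin n → ℕ := Sum.elim (fun a => 2 * a.1) (fun a => 2 * a.1 + 1)

noncomputable def gam (n k : ℕ) (p : EnhPt2 n) : ℂ := p.1 ⬝ᵥ ((J n * p.2 ^ k) *ᵥ p.1)

noncomputable def Mat (n : ℕ) (p : EnhPt2 n) : Matrix (Fin n ⊕ Fin n) (Fin n ⊕ Fin n) ℂ :=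
  Matrix.of fun i j => (p.2 ^ (ex j) *ᵥ p.1) i

noncomputable def H (n : ℕ) (p : EnhPt2 n) : Matrix (Fin n) (Fin n) ℂ :=
  Matrix.of fun a b => gam n (2 * a.1 + (2 * b.1 + 1)) p

noncomputable def P (n : ℕ) (p : EnhPt2 n) : Matrix (Fin n ⊕ Fin n) (Fin n ⊕ Fin n) ℂ :=
  Matrix.fromBlocks 1 0 0 (H n p)⁻¹

lemma J_sq (n : ℕ) : J n * J n = -1 := by
  simp [_root_.J, Matrix.fromBlocks_multiply, ← Matrix.fromBlocks_one, Matrix.fromBlocks_neg]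

lemma J_tr (n : ℕ) : (J n)ᵀ = - J n := by
  simp [_root_.J, Matrix.fromBlocks_transpose, Matrix.fromBlocks_neg]

lemma trA {n : ℕ} {A : Matrix (Fin n ⊕ Fin n) (Fin n ⊕ Fin n) ℂ} (hA : A ∈ spLie n) (k : ℕ) :
    (A ^ k)ᵀ * J n = (-1 : ℂ) ^ k • (J n * A ^ k) := by
  have h1 : Aᵀ * J n = - (J n * A) := eq_neg_of_add_eq_zero_left hA
  induction k with
  | zero => simp
  | succ k ih =>
    rw [pow_succ, Matrix.transpose_mul, Matrix.mul_assoc, ih, Matrix.mul_smul, ← Matrix.mul_assoc,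
      h1, ← pow_succ, pow_succ' A k, pow_succ (-1 : ℂ) k, Matrix.neg_mul, Matrix.mul_assoc]
    simp

lemma pair {n : ℕ} {A : Matrix (Fin n ⊕ Fin n) (Fin n ⊕ Fin n) ℂ} (hA : A ∈ spLie n)
    (v : Fin n ⊕ Fin n → ℂ) (i k : ℕ) :
    (A ^ i *ᵥ v) ⬝ᵥ ((J n * A ^ k) *ᵥ v) = (-1 : ℂ) ^ i * gam n (i + k) (v, A) := by
  have : (A ^ i *ᵥ v) ⬝ᵥ ((J n * A ^ k) *ᵥ v) = v ⬝ᵥ (((A ^ i)ᵀ * J n * A ^ k) *ᵥ v) := by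
    rw [Matrix.mul_assoc, ← Matrix.mulVec_mulVec _ (A ^ i)ᵀ, Matrix.dotProduct_mulVec v,
      Matrix.vecMul_transpose]
  rw [this, trA hA, gam, Matrix.smul_mul, Matrix.smul_mulVec, dotProduct_smul, Matrix.mul_assoc,
    ← pow_add, smul_eq_mul]

lemma gam_even {n : ℕ} {A : Matrix (Fin n ⊕ Fin n) (Fin n ⊕ Fin n) ℂ} (hA : A ∈ spLie n)
    (v : Fin n ⊕ Fin n → ℂ) (k : ℕ) (hk : Even k) : gam n k (v, A) = 0 := by
  have h1 := pair hA v k 0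
  have h2 : (A ^ k *ᵥ v) ⬝ᵥ ((J n * A ^ 0) *ᵥ v) = - gam n k (v, A) := by
    have e : ((J n * A ^ 0) *ᵥ v) = -(v ᵥ* J n) := by
      rw [pow_zero, Matrix.mul_one, ← Matrix.vecMul_transpose, J_tr, Matrix.vecMul_neg]
    rw [e, dotProduct_neg, dotProduct_comm, ← Matrix.dotProduct_mulVec, Matrix.mulVec_mulVec, gam]
  rw [h2, hk.neg_one_pow, one_mul, add_zero] at h1
  have h3 : (2 : ℂ) * gam n k (v, A) = 0 := by linear_combination -h1
  simpa using h3

lemma gramk {n : ℕ} {A : Matrix (Fin n ⊕ Fin n) (Fin n ⊕ Fin n) ℂ} (hA : A ∈ spLie n)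
    (v : Fin n ⊕ Fin n → ℂ) (k : ℕ) (i j) :
    ((Mat n (v, A))ᵀ * (J n * A ^ k) * Mat n (v, A)) i j
      = (-1 : ℂ) ^ (ex i) * gam n (ex i + (k + ex j)) (v, A) := by
  rw [← pair hA, Matrix.mul_assoc, pow_add, ← Matrix.mul_assoc (J n),
    ← Matrix.mulVec_mulVec _ (J n * A ^ k)]
  rfl

lemma gramv {n : ℕ} {A : Matrix (Fin n ⊕ Fin n) (Fin n ⊕ Fin n) ℂ} (hA : A ∈ spLie n)
    (v : Fin n ⊕ Fin n → ℂ) (i) :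
    ((Mat n (v, A))ᵀ *ᵥ (J n *ᵥ v)) i = (-1 : ℂ) ^ (ex i) * gam n (ex i) (v, A) := by
  have := pair hA v (ex i) 0
  rw [add_zero, pow_zero, Matrix.mul_one] at this
  rw [← this]
  rfl

lemma gram0 {n : ℕ} {A : Matrix (Fin n ⊕ Fin n) (Fin n ⊕ Fin n) ℂ} (hA : A ∈ spLie n)
    (v : Fin n ⊕ Fin n → ℂ) :
    (Mat n (v, A))ᵀ * J n * Mat n (v, A)
      = Matrix.fromBlocks 0 (H n (v, A)) (-(H n (v, A))) 0 := by
  ext i j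
  have := gramk hA v 0 i j
  rw [pow_zero, Matrix.mul_one] at this
  rw [this]
  rcases i with a | a <;> rcases j with b | b <;> simp only [ex, Sum.elim_inl, Sum.elim_inr,
    Matrix.fromBlocks_apply₁₁, Matrix.fromBlocks_apply₁₂, Matrix.fromBlocks_apply₂₁,
    Matrix.fromBlocks_apply₂₂, Matrix.zero_apply, Matrix.neg_apply]
  · rw [gam_even hA v _ ⟨a + b, by ring⟩, mul_zero]
  · rw [(even_two_mul _).neg_one_pow]; simp [H]
  · rw [(odd_two_mul_add_one _).neg_one_pow]; simp only [H, Matrix.of_apply, neg_mul, one_mul]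
    congr 2; ring
  · rw [gam_even hA v _ ⟨a + b + 1, by ring⟩, mul_zero]

lemma H_symm (n : ℕ) (p : EnhPt2 n) : (H n p)ᵀ = H n p := by
  ext a b
  simp only [H, Matrix.transpose_apply, Matrix.of_apply]
  congr 1; ring

lemma P_symp {n : ℕ} {A : Matrix (Fin n ⊕ Fin n) (Fin n ⊕ Fin n) ℂ} (hA : A ∈ spLie n)
    (v : Fin n ⊕ Fin n → ℂ) (hd : (H n (v, A)).det ≠ 0) :
    (Mat n (v, A) * P n (v, A))ᵀ * J n * (Mat n (v, A) * P n (v, A)) = J n := by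
  have hu : IsUnit (H n (v, A)).det := isUnit_iff_ne_zero.2 hd
  have : (Mat n (v, A) * P n (v, A))ᵀ * J n * (Mat n (v, A) * P n (v, A))
    = (P n (v, A))ᵀ * ((Mat n (v, A))ᵀ * J n * Mat n (v, A)) * P n (v, A) := by
    simp only [Matrix.transpose_mul, Matrix.mul_assoc]
  rw [this, gram0 hA]
  simp [P, _root_.J, Matrix.fromBlocks_transpose, Matrix.fromBlocks_multiply, Matrix.transpose_nonsing_inv,
    H_symm, Matrix.mul_nonsing_inv _ hu, Matrix.nonsing_inv_mul _ hu]

/-- normal form -/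
noncomputable def Phi (n : ℕ) (p : EnhPt2 n) : EnhPt2 n :=
  (-(J n * (P n p)ᵀ) *ᵥ ((Mat n p)ᵀ *ᵥ (J n *ᵥ p.1)),
   -(J n * (P n p)ᵀ) * ((Mat n p)ᵀ * (J n * p.2 ^ 1) * Mat n p) * P n p)

lemma f_Phi {n : ℕ} (f : EnhPt2 n → ℂ)
    (hinv : ∀ g ∈ SpSet n, ∀ v, ∀ A ∈ spLie n, f (g *ᵥ v, g * A * g⁻¹) = f (v, A))
    {A : Matrix (Fin n ⊕ Fin n) (Fin n ⊕ Fin n) ℂ} (hA : A ∈ spLie n)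
    (v : Fin n ⊕ Fin n → ℂ) (hd : (H n (v, A)).det ≠ 0) :
    f (Phi n (v, A)) = f (v, A) := by
  have hs := P_symp hA v hd
  set g := Mat n (v, A) * P n (v, A) with hg
  have h1 : (-(J n * gᵀ * J n)) * g = 1 := by
    rw [Matrix.neg_mul, Matrix.mul_assoc, Matrix.mul_assoc, ← Matrix.mul_assoc gᵀ, hs, J_sq, neg_neg]
  have h2 : g * (-(J n * gᵀ * J n)) = 1 := mul_eq_one_comm.1 h1
  set g' := -(J n * gᵀ * J n) with hg'
  have hinv' : g'⁻¹ = g := Matrix.inv_eq_right_inv h1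
  have hmem : g' ∈ SpSet n := by
    change g'ᵀ * J n * g' = J n
    calc g'ᵀ * J n * g' = g'ᵀ * (gᵀ * J n * g) * g' := by rw [hs]
      _ = (g * g')ᵀ * J n * (g * g') := by simp only [Matrix.transpose_mul, Matrix.mul_assoc]
      _ = J n := by rw [h2]; simp
  rw [← hinv g' hmem v A hA, hinv', Phi]
  congr 2
  · simp only [Matrix.mulVec_mulVec, hg', hg, Matrix.transpose_mul, Matrix.mul_assoc, Matrix.neg_mul]
  · simp only [hg', hg, Matrix.transpose_mul, Matrix.mul_assoc, Matrix.neg_mul, pow_one]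

/-- functions which become generated after multiplying by a power of `det H` -/
def W (n : ℕ) : Subalgebra ℂ (EnhPt2 n → ℂ) where
  carrier := {u | ∃ N : ℕ, ∃ b ∈ Algebra.adjoin ℂ (spInvGens n), ∀ v, ∀ A ∈ spLie n,
    (H n (v, A)).det ≠ 0 → (H n (v, A)).det ^ N * u (v, A) = b (v, A)}
  mul_mem' := by
    rintro x y ⟨N, b, hb, h⟩ ⟨N', b', hb', h'⟩
    refine ⟨N + N', b * b', mul_mem hb hb', fun v A hA hd => ?_⟩
    rw [Pi.mul_apply, Pi.mul_apply, ← h v A hA hd, ← h' v A hA hd]; ring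
  add_mem' := by
    rintro x y ⟨N, b, hb, h⟩ ⟨N', b', hb', h'⟩
    have hdet : (fun p => (H n p).det) ∈ Algebra.adjoin ℂ (spInvGens n) := by
      have : (fun p => (H n p).det) = ∑ σ : Equiv.Perm (Fin n),
          ((Equiv.Perm.sign σ : ℤ) : EnhPt2 n → ℂ) * ∏ i, (fun p => H n p (σ i) i) := by
        ext p; simp [Matrix.det_apply']
      rw [this]
      refine sum_mem fun σ _ => mul_mem (intCast_mem _ _) (prod_mem fun i _ => ?_)
      exact Algebra.subset_adjoin (Or.inr ⟨_, ⟨(σ i).1 + i.1, by ring⟩, rfl⟩)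
    refine ⟨N + N', (fun p => (H n p).det) ^ N' * b + (fun p => (H n p).det) ^ N * b',
      add_mem (mul_mem (pow_mem hdet _) hb) (mul_mem (pow_mem hdet _) hb'), fun v A hA hd => ?_⟩
    simp only [Pi.mul_apply, Pi.add_apply, Pi.pow_apply]
    rw [← h v A hA hd, ← h' v A hA hd]; ring
  algebraMap_mem' := fun c => ⟨0, _, Subalgebra.algebraMap_mem _ c, fun v A hA hd => by simp⟩

lemma det_mem (n : ℕ) : (fun p => (H n p).det) ∈ Algebra.adjoin ℂ (spInvGens n) := by
  have : (fun p => (H n p).det) = ∑ σ : Equiv.Perm (Fin n),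
      ((Equiv.Perm.sign σ : ℤ) : EnhPt2 n → ℂ) * ∏ i, (fun p => H n p (σ i) i) := by
    ext p; simp [Matrix.det_apply']
  rw [this]
  refine sum_mem fun σ _ => mul_mem (intCast_mem _ _) (prod_mem fun i _ => ?_)
  exact Algebra.subset_adjoin (Or.inr ⟨_, ⟨(σ i).1 + i.1, by ring⟩, rfl⟩)

lemma W_congr {n : ℕ} {u w : EnhPt2 n → ℂ} (hw : w ∈ W n)
    (h : ∀ v, ∀ A ∈ spLie n, u (v, A) = w (v, A)) : u ∈ W n := by
  obtain ⟨N, b, hb, h'⟩ := hw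
  exact ⟨N, b, hb, fun v A hA hd => by rw [h v A hA, h' v A hA hd]⟩

lemma gam_mem (n k : ℕ) : gam n k ∈ W n := by
  rcases Nat.even_or_odd k with hk | hk
  · exact W_congr (zero_mem _) fun v A hA => gam_even hA v k hk
  · exact ⟨0, gam n k, Algebra.subset_adjoin (Or.inr ⟨k, hk, rfl⟩), fun v A hA hd => by simp⟩

lemma mul_W {n : ℕ} {α β δ : Type*} [Fintype β] (X : EnhPt2 n → Matrix α β ℂ)
    (Y : EnhPt2 n → Matrix β δ ℂ) (hX : ∀ i j, (fun p => X p i j) ∈ W n)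
    (hY : ∀ i j, (fun p => Y p i j) ∈ W n) (i j) : (fun p => (X p * Y p) i j) ∈ W n := by
  have : (fun p => (X p * Y p) i j) = ∑ k, (fun p => X p i k) * (fun p => Y p k j) := by
    ext p; simp [Matrix.mul_apply]
  rw [this]
  exact sum_mem fun k _ => mul_mem (hX i k) (hY k j)

lemma mulVec_W {n : ℕ} {α β : Type*} [Fintype β] (X : EnhPt2 n → Matrix α β ℂ)
    (Y : EnhPt2 n → β → ℂ) (hX : ∀ i j, (fun p => X p i j) ∈ W n)
    (hY : ∀ i, (fun p => Y p i) ∈ W n) (i) : (fun p => (X p *ᵥ Y p) i) ∈ W n := by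
  have : (fun p => (X p *ᵥ Y p) i) = ∑ k, (fun p => X p i k) * (fun p => Y p k) := by
    ext p; simp [Matrix.mulVec, dotProduct]
  rw [this]
  exact sum_mem fun k _ => mul_mem (hX i k) (hY k)

lemma const_W {n : ℕ} (c : ℂ) : (fun _ : EnhPt2 n => c) ∈ W n := Subalgebra.algebraMap_mem (W n) c

lemma neg_W {n : ℕ} {u : EnhPt2 n → ℂ} (h : u ∈ W n) : (fun p => - u p) ∈ W n :=
  neg_mem (S := Subalgebra ℂ (EnhPt2 n → ℂ)) h

lemma det_W {n : ℕ} (X : EnhPt2 n → Matrix (Fin n) (Fin n) ℂ)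
    (hX : ∀ i j, (fun p => X p i j) ∈ W n) : (fun p => (X p).det) ∈ W n := by
  have : (fun p => (X p).det) = ∑ σ : Equiv.Perm (Fin n),
      ((Equiv.Perm.sign σ : ℤ) : EnhPt2 n → ℂ) * ∏ i, (fun p => X p (σ i) i) := by
    ext p; simp [Matrix.det_apply']
  rw [this]
  exact sum_mem fun σ _ => mul_mem (intCast_mem _ _) (prod_mem fun i _ => hX _ _)

lemma Hinv_W (n : ℕ) (a b) : (fun p => (H n p)⁻¹ a b) ∈ W n := by
  have h1 : (fun p => ((H n p).det)⁻¹) ∈ W n :=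
    ⟨1, 1, one_mem _, fun v A hA hd => by simp [hd]⟩
  have h2 : (fun p => (H n p).adjugate a b) ∈ W n := by
    simp only [Matrix.adjugate_apply]
    refine det_W _ fun i j => ?_
    by_cases h : i = b
    · subst h
      simp only [Matrix.updateRow_self]
      exact const_W _
    · simp only [Matrix.updateRow_ne h]
      exact gam_mem n _
  have : (fun p => (H n p)⁻¹ a b)
      = (fun p => ((H n p).det)⁻¹) * (fun p => (H n p).adjugate a b) := by
    ext p; simp [Matrix.inv_def]
  rw [this]; exact mul_mem h1 h2

lemma P_W (n : ℕ) (i j) : (fun p => P n p i j) ∈ W n := by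
  rcases i with a | a <;> rcases j with b | b <;> simp only [P, 
    Matrix.fromBlocks_apply₁₁, Matrix.fromBlocks_apply₁₂, Matrix.fromBlocks_apply₂₁,
    Matrix.fromBlocks_apply₂₂]
  · exact const_W _
  · exact const_W _
  · exact const_W _
  · exact Hinv_W n a b

lemma JP_W (n : ℕ) (i j) : (fun p => (-(J n * (P n p)ᵀ)) i j) ∈ W n :=
  neg_W (mul_W (fun _ => J n) (fun p => (P n p)ᵀ) (fun _ _ => const_W _) (fun i j => P_W n j i) i j)

lemma Phi1_W (n : ℕ) (i) : (fun p => (Phi n p).1 i) ∈ W n := by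
  refine mulVec_W (fun p => -(J n * (P n p)ᵀ)) (fun p => (Mat n p)ᵀ *ᵥ (J n *ᵥ p.1)) (JP_W n) ?_ i
  intro i
  exact W_congr (mul_mem (const_W ((-1) ^ ex i)) (gam_mem n (ex i))) fun v A hA => gramv hA v i

lemma Phi2_W (n : ℕ) (i j) : (fun p => (Phi n p).2 i j) ∈ W n := by
  refine mul_W (fun p => -(J n * (P n p)ᵀ) * ((Mat n p)ᵀ * (J n * p.2 ^ 1) * Mat n p))
    (fun p => P n p) ?_ (P_W n) i j
  refine mul_W (fun p => -(J n * (P n p)ᵀ)) (fun p => (Mat n p)ᵀ * (J n * p.2 ^ 1) * Mat n p)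
    (JP_W n) ?_
  intro i j
  exact W_congr (mul_mem (const_W ((-1) ^ ex i)) (gam_mem n (ex i + (1 + ex j))))
    fun v A hA => gramk hA v 1 i j

lemma fPhi_W {n : ℕ} {f : EnhPt2 n → ℂ} (hf : f ∈ polyFns2 n) : (fun p => f (Phi n p)) ∈ W n := by
  induction hf using Algebra.adjoin_induction with
  | mem x hx =>
    rcases hx with ⟨i, rfl⟩ | ⟨i, j, rfl⟩
    · exact Phi1_W n i
    · exact Phi2_W n i j
  | algebraMap r => exact const_W r
  | add x y _ _ hx hy => exact add_mem hx hy
  | mul x y _ _ hx hy => exact mul_mem hx hy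

/-- a point where `det H` does not vanish -/
lemma exists_pt (n : ℕ) : ∃ v, ∃ A ∈ spLie n, (H n (v, A)).det ≠ 0 := by
  let l : Fin n → ℂ := fun i => (i.1 : ℂ) + 1
  have hl : ∀ i, l i ≠ 0 := fun i => Nat.cast_add_one_ne_zero _
  let A : Matrix (Fin n ⊕ Fin n) (Fin n ⊕ Fin n) ℂ := Matrix.diagonal (Sum.elim l (-l))
  refine ⟨fun _ => 1, A, ?_, ?_⟩
  · change Aᵀ * J n + J n * A = 0
    ext i j
    rcases i with a | a <;> rcases j with b | b <;>
      simp [A, _root_.J, Matrix.one_apply] <;> split_ifs with h <;> simp [h]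
  · have key : H n (fun _ => 1, A) = (-2 : ℂ) •
        ((Matrix.vandermonde fun i => l i ^ 2)ᵀ * Matrix.diagonal l *
          (Matrix.vandermonde fun i => l i ^ 2)) := by
      ext a b
      have ho : Odd (2 * a.1 + (2 * b.1 + 1)) := ⟨a.1 + b.1, by ring⟩
      simp only [H, gam, Matrix.of_apply, A, Matrix.diagonal_pow, Matrix.smul_apply,
        Matrix.mul_apply (M := _ * _), Matrix.mul_diagonal, Matrix.vandermonde_apply,
        Matrix.transpose_apply, smul_eq_mul, Finset.mul_sum]
      simp only [← Matrix.mulVec_mulVec, _root_.J, dotProduct, one_mul, Fintype.sum_sum_type,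
        Matrix.mulVec, Matrix.fromBlocks_apply₁₁, Matrix.fromBlocks_apply₁₂,
        Matrix.fromBlocks_apply₂₁, Matrix.fromBlocks_apply₂₂, Matrix.diagonal_apply]
      simp [Matrix.one_apply, ho.neg_pow]
      rw [← neg_add, ← Finset.sum_add_distrib, neg_inj]
      refine Finset.sum_congr rfl fun i _ => ?_
      ring
    rw [key, Matrix.det_smul, Matrix.det_mul, Matrix.det_mul, Matrix.det_transpose,
      Matrix.det_diagonal]
    have hv : (Matrix.vandermonde fun i => l i ^ 2).det ≠ 0 := by
      rw [Matrix.det_vandermonde_ne_zero_iff]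
      intro i j hij
      have h : ((i.1 : ℂ) + 1) ^ 2 = ((j.1 : ℂ) + 1) ^ 2 := hij
      have h' : (i.1 + 1) ^ 2 = (j.1 + 1) ^ 2 := by exact_mod_cast h
      have := Nat.pow_left_injective (n := 2) (by norm_num) h'
      exact Fin.ext (by omega)
    have := Finset.prod_ne_zero_iff.2 fun i (_ : i ∈ Finset.univ) => hl i
    exact mul_ne_zero (by simp) (mul_ne_zero (mul_ne_zero hv this) hv)

end SpAux

/-- Every `Sp_{2n}(ℂ)`-invariant polynomial function on `ℂ^{2n} ⊕ sp_{2n}(ℂ)` lies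
in the quotient field of the subalgebra generated by the invariants on
`sp_{2n}(ℂ)` and the `γ_k` for odd `k ≥ 1`:  there are `p, q` in this subalgebra,
`q` not identically zero on `ℂ^{2n} ⊕ sp_{2n}(ℂ)`, with `q·f = p` there. -/
theorem Sp_invariants_rationally_generated (n : ℕ) (hn : 1 ≤ n)
    (f : EnhPt2 n → ℂ) (hf : f ∈ polyFns2 n)
    (hinv : ∀ g ∈ SpSet n, ∀ v, ∀ A ∈ spLie n, f (g *ᵥ v, g * A * g⁻¹) = f (v, A)) :
    ∃ p q : EnhPt2 n → ℂ,
      p ∈ Algebra.adjoin ℂ (spInvGens n) ∧ q ∈ Algebra.adjoin ℂ (spInvGens n) ∧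
      (¬ ∀ v, ∀ A ∈ spLie n, q (v, A) = 0) ∧
      (∀ v, ∀ A ∈ spLie n, q (v, A) * f (v, A) = p (v, A)) := by
  obtain ⟨N, b, hb, h⟩ := SpAux.fPhi_W hf
  obtain ⟨v0, A0, hA0, hd0⟩ := SpAux.exists_pt n
  have hdet := SpAux.det_mem n
  refine ⟨(fun p => (SpAux.H n p).det) * b, (fun p => (SpAux.H n p).det) ^ (N + 1),
    mul_mem hdet hb, pow_mem hdet _, fun hz => ?_, fun v A hA => ?_⟩
  · exact pow_ne_zero (N + 1) hd0 (hz v0 A0 hA0)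
  · simp only [Pi.mul_apply, Pi.pow_apply]
    by_cases hd : (SpAux.H n (v, A)).det = 0
    · simp [hd]
    · rw [← h v A hA hd]
      simp only [SpAux.f_Phi f hinv hA v hd]
      ring
end

section
/- Let x = [[1, 1],[0, 1]] ∈ GL₂(ℂ) and let β ∈ ℂ. The matrix h = [[−1, β],[0, −1]] satisfies h x h⁻¹ = x and σ(h) = h, but there exists no f ∈ GL₂(ℂ) with f x f⁻¹ = x, σ(f) = f, and f² = h. Thus the square-root assumption of the orbit embedding theorem fails at x, which is the obstruction preventing the map X/K → X̃/G from being injective. -/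
open Matrix

/-- The matrix `I = diag(1, −1) ∈ GL₂(ℂ)`. -/
noncomputable def Imat : Matrix (Fin 2) (Fin 2) ℂ := !![1, 0; 0, -1]

/-- The involutive anti-automorphism `σ(g) = I⁻¹ g⁻¹ I` of `GL₂(ℂ)`. -/
noncomputable def sig (g : Matrix (Fin 2) (Fin 2) ℂ) : Matrix (Fin 2) (Fin 2) ℂ :=
  Imat⁻¹ * g⁻¹ * Imat

/-- For `x = [[1,1],[0,1]]` and any `β ∈ ℂ`, the matrix `h = [[−1,β],[0,−1]]`
stabilizes `x` under conjugation and is `σ`-fixed, yet `h` has no `σ`-fixed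
square root in the stabilizer of `x`: the square-root assumption of the orbit
embedding theorem fails at `x`. -/
theorem obstruction_at_unipotent (β : ℂ) :
    IsUnit (!![(-1 : ℂ), β; 0, -1]) ∧
    !![(-1 : ℂ), β; 0, -1] * !![(1 : ℂ), 1; 0, 1] * (!![(-1 : ℂ), β; 0, -1])⁻¹ =
      !![(1 : ℂ), 1; 0, 1] ∧
    sig !![(-1 : ℂ), β; 0, -1] = !![(-1 : ℂ), β; 0, -1] ∧
    ¬ ∃ f : Matrix (Fin 2) (Fin 2) ℂ, IsUnit f ∧
        f * !![(1 : ℂ), 1; 0, 1] * f⁻¹ = !![(1 : ℂ), 1; 0, 1] ∧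
        sig f = f ∧ f * f = !![(-1 : ℂ), β; 0, -1] := by
  have hI : Imat⁻¹ = Imat := by
    apply Matrix.inv_eq_right_inv
    ext i j; fin_cases i <;> fin_cases j <;> simp [Imat, Matrix.mul_apply]
  have hh : (!![(-1 : ℂ), β; 0, -1])⁻¹ = !![(-1 : ℂ), -β; 0, -1] := by
    apply Matrix.inv_eq_right_inv
    ext i j; fin_cases i <;> fin_cases j <;> simp [Matrix.mul_apply]
  refine ⟨?_, ?_, ?_, ?_⟩
  · rw [Matrix.isUnit_iff_isUnit_det, Matrix.det_fin_two_of]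
    simp
  · rw [hh]
    ext i j; fin_cases i <;> fin_cases j <;> simp [Matrix.mul_apply]
  · rw [sig, hI, hh]
    ext i j; fin_cases i <;> fin_cases j <;> simp [Imat, Matrix.mul_apply]
  · rintro ⟨f, hu, hx, hs, hf⟩
    have hd : IsUnit f.det := (Matrix.isUnit_iff_isUnit_det f).1 hu
    have hx2 : f * !![(1 : ℂ), 1; 0, 1] = !![(1 : ℂ), 1; 0, 1] * f := by
      have h := congrArg (fun m => m * f) hx
      simpa only [Matrix.mul_assoc, Matrix.nonsing_inv_mul f hd, Matrix.mul_one] using h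
    have hII : Imat * Imat = 1 := by
      ext i j; fin_cases i <;> fin_cases j <;> simp [Imat, Matrix.mul_apply]
    have hs2 : f * Imat * f = Imat := by
      rw [sig, hI] at hs
      calc f * Imat * f = f * Imat * (Imat * f⁻¹ * Imat) := by rw [hs]
        _ = f * (Imat * Imat) * f⁻¹ * Imat := by simp only [Matrix.mul_assoc]
        _ = Imat := by rw [hII, Matrix.mul_one, Matrix.mul_nonsing_inv f hd, Matrix.one_mul]
    have e1 := congrFun (congrFun hx2 0) 0
    have e2 := congrFun (congrFun hs2 0) 0
    have e3 := congrFun (congrFun hf 0) 0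
    simp [Imat, Matrix.mul_apply, Fin.sum_univ_two] at e1 e2 e3
    simp [e1] at e2 e3
    rw [e3] at e2
    norm_num at e2
end

section
/- Let x = diag(1, −1) ∈ GL₂(ℂ). The matrix h = −1₂ (minus the identity) satisfies h x h⁻¹ = x and σ(h) = h, but there exists no f ∈ GL₂(ℂ) with f x f⁻¹ = x, σ(f) = f, and f² = h. Indeed G_x^σ = {diag(α, δ) : α = ±1, δ = ±1}, and the square of every element of G_x^σ is the identity. -/
open Matrix

theorem xx_aux : (!![(1 : ℂ), 0; 0, -1] : Matrix (Fin 2) (Fin 2) ℂ) * !![(1 : ℂ), 0; 0, -1] = 1 := by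
  ext i j; fin_cases i <;> fin_cases j <;> simp

theorem sig_aux (g : Matrix (Fin 2) (Fin 2) ℂ) :
    sig g = !![(1 : ℂ), 0; 0, -1] * g⁻¹ * !![(1 : ℂ), 0; 0, -1] := by
  unfold sig Imat
  rw [Matrix.inv_eq_left_inv xx_aux]

theorem sq_aux (g : Matrix (Fin 2) (Fin 2) ℂ)
    (h : g * !![(1 : ℂ), 0; 0, -1] * g⁻¹ = !![(1 : ℂ), 0; 0, -1]) (hs : sig g = g) :
    g * g = 1 := by
  rw [sig_aux] at hs
  calc g * g = g * (!![(1 : ℂ), 0; 0, -1] * g⁻¹ * !![(1 : ℂ), 0; 0, -1]) := by rw [hs]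
    _ = (g * !![(1 : ℂ), 0; 0, -1] * g⁻¹) * !![(1 : ℂ), 0; 0, -1] := by
      simp only [Matrix.mul_assoc]
    _ = 1 := by rw [h, xx_aux]

theorem diag_aux (a d : ℂ) (ha : a = 1 ∨ a = -1) (hd : d = 1 ∨ d = -1) :
    IsUnit (!![a, 0; 0, d] : Matrix (Fin 2) (Fin 2) ℂ) ∧
    !![a, 0; 0, d] * !![(1 : ℂ), 0; 0, -1] * (!![a, 0; 0, d])⁻¹ = !![(1 : ℂ), 0; 0, -1] ∧
    sig !![a, 0; 0, d] = !![a, 0; 0, d] := by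
  have h : (!![a, 0; 0, d] : Matrix (Fin 2) (Fin 2) ℂ) * !![a, 0; 0, d] = 1 := by
    ext i j
    rcases ha with rfl | rfl <;> rcases hd with rfl | rfl <;>
      fin_cases i <;> fin_cases j <;> simp
  refine ⟨IsUnit.of_mul_eq_one _ h, ?_, ?_⟩
  · rw [Matrix.inv_eq_left_inv h]
    ext i j
    rcases ha with rfl | rfl <;> rcases hd with rfl | rfl <;>
      fin_cases i <;> fin_cases j <;> simp
  · rw [sig_aux, Matrix.inv_eq_left_inv h]
    ext i j
    fin_cases i <;> fin_cases j <;> simp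

theorem neg_one_aux : (-1 : Matrix (Fin 2) (Fin 2) ℂ) = !![-1, 0; 0, -1] := by
  ext i j; fin_cases i <;> fin_cases j <;> simp

/-- For `x = diag(1, −1)`, the matrix `h = −1₂` stabilizes `x` under conjugation
and is `σ`-fixed, but has no `σ`-fixed square root in the stabilizer of `x`.
Indeed `G_x^σ = {diag(α,δ) : α = ±1, δ = ±1}` and every element of `G_x^σ`
squares to the identity. -/
theorem obstruction_at_diag_sign :
    IsUnit (-1 : Matrix (Fin 2) (Fin 2) ℂ) ∧
    (-1 : Matrix (Fin 2) (Fin 2) ℂ) * !![(1 : ℂ), 0; 0, -1] *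
        (-1 : Matrix (Fin 2) (Fin 2) ℂ)⁻¹ = !![(1 : ℂ), 0; 0, -1] ∧
    sig (-1 : Matrix (Fin 2) (Fin 2) ℂ) = (-1 : Matrix (Fin 2) (Fin 2) ℂ) ∧
    (¬ ∃ f : Matrix (Fin 2) (Fin 2) ℂ, IsUnit f ∧
        f * !![(1 : ℂ), 0; 0, -1] * f⁻¹ = !![(1 : ℂ), 0; 0, -1] ∧
        sig f = f ∧ f * f = (-1 : Matrix (Fin 2) (Fin 2) ℂ)) ∧
    ({g : Matrix (Fin 2) (Fin 2) ℂ | IsUnit g ∧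
        g * !![(1 : ℂ), 0; 0, -1] * g⁻¹ = !![(1 : ℂ), 0; 0, -1] ∧ sig g = g} =
      {m | ∃ α δ : ℂ, (α = 1 ∨ α = -1) ∧ (δ = 1 ∨ δ = -1) ∧ m = !![α, 0; 0, δ]}) ∧
    (∀ g : Matrix (Fin 2) (Fin 2) ℂ, IsUnit g →
      g * !![(1 : ℂ), 0; 0, -1] * g⁻¹ = !![(1 : ℂ), 0; 0, -1] → sig g = g →
      g * g = 1) := by
  have hd := diag_aux (-1) (-1) (Or.inr rfl) (Or.inr rfl)
  rw [← neg_one_aux] at hd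
  refine ⟨hd.1, hd.2.1, hd.2.2, ?_, ?_, fun g _ h hs => sq_aux g h hs⟩
  · rintro ⟨f, _, h, hs, hf⟩
    rw [sq_aux f h hs] at hf
    have := congrFun (congrFun hf 0) 0
    norm_num at this
  · ext g
    constructor
    · rintro ⟨_, h, hs⟩
      have h2 := sq_aux g h hs
      rw [Matrix.inv_eq_left_inv h2] at h
      have hc : g * !![(1 : ℂ), 0; 0, -1] = !![(1 : ℂ), 0; 0, -1] * g := by
        calc g * !![(1 : ℂ), 0; 0, -1] = g * !![(1 : ℂ), 0; 0, -1] * (g * g) := by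
              rw [h2, Matrix.mul_one]
          _ = (g * !![(1 : ℂ), 0; 0, -1] * g) * g := by simp only [Matrix.mul_assoc]
          _ = _ := by rw [h]
      have h01 := congrFun (congrFun hc 0) 1
      have h10 := congrFun (congrFun hc 1) 0
      have h00 := congrFun (congrFun h2 0) 0
      have h11 := congrFun (congrFun h2 1) 1
      simp only [Matrix.mul_apply, Fin.sum_univ_two] at h01 h10 h00 h11
      simp at h01 h10 h00 h11
      have e01 : g 0 1 = 0 := by grind
      have e10 : g 1 0 = 0 := by grind
      refine ⟨g 0 0, g 1 1, ?_, ?_, ?_⟩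
      · apply mul_self_eq_one_iff.mp
        simpa [e01] using h00
      · apply mul_self_eq_one_iff.mp
        simpa [e01] using h11
      · ext i j; fin_cases i <;> fin_cases j <;> simp [e01, e10]
    · rintro ⟨a, d, ha, hd, rfl⟩
      exact diag_aux a d ha hd
end

section
/- Let R ⊂ GL₂(ℂ) be the set consisting of: all matrices [[a, b],[b, a]] with a² − b² = 1 and (Re b > 0, or b = i t for some real t ≥ 0); the matrices [[ε, 1],[0, ε]] for ε = ±1; the matrices [[ε, 0],[1, ε]] for ε = ±1; and the matrices [[ε, 0],[0, −ε]] for ε = ±1. Then R is a complete set of representatives of the K-orbits in X: every g ∈ X is conjugate by an invertible diagonal matrix to exactly one element of R. -/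
open Matrix

/-- The proposed set of representatives `R ⊂ GL₂(ℂ)`:
matrices `[[a,b],[b,a]]` with `a² − b² = 1` and (`Re b > 0` or `b ∈ i·ℝ_{≥0}`);
the matrices `[[ε,1],[0,ε]]`, `[[ε,0],[1,ε]]` and `[[ε,0],[0,−ε]]` for `ε = ±1`. -/
def Reps : Set (Matrix (Fin 2) (Fin 2) ℂ) :=
  {m | ∃ a b : ℂ, a ^ 2 - b ^ 2 = 1 ∧
      (0 < b.re ∨ ∃ t : ℝ, 0 ≤ t ∧ b = Complex.I * (t : ℂ)) ∧ m = !![a, b; b, a]} ∪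
  {m | ∃ ε : ℂ, (ε = 1 ∨ ε = -1) ∧ m = !![ε, 1; 0, ε]} ∪
  {m | ∃ ε : ℂ, (ε = 1 ∨ ε = -1) ∧ m = !![ε, 0; 1, ε]} ∪
  {m | ∃ ε : ℂ, (ε = 1 ∨ ε = -1) ∧ m = !![ε, 0; 0, -ε]}

lemma hp_iff (b : ℂ) : (0 < b.re ∨ ∃ t : ℝ, 0 ≤ t ∧ b = Complex.I * (t : ℂ)) ↔
    (0 < b.re ∨ (b.re = 0 ∧ 0 ≤ b.im)) := by
  constructor
  · rintro (h | ⟨t, ht, rfl⟩)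
    · exact Or.inl h
    · right; simpa using ht
  · rintro (h | ⟨h1, h2⟩)
    · exact Or.inl h
    · right
      refine ⟨b.im, h2, ?_⟩
      apply Complex.ext <;> simp [h1]

lemma hp_unique (b c : ℂ) (hb : 0 < b.re ∨ (b.re = 0 ∧ 0 ≤ b.im))
    (hc : 0 < c.re ∨ (c.re = 0 ∧ 0 ≤ c.im)) (h : b * b = c * c) : b = c := by
  rcases mul_self_eq_mul_self_iff.mp h with h | h
  · exact h
  · subst h
    simp only [Complex.neg_re, Complex.neg_im] at hb
    have h1 : c.re = 0 := by
      rcases hb with hb | hb <;> rcases hc with hc | hc <;> linarith [hb, hc]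
    have h2 : c.im = 0 := by
      rcases hb with hb | hb <;> rcases hc with hc | hc
      · linarith
      · linarith [hc.1]
      · linarith [hb.1]
      · linarith [hb.2, hc.2]
    apply Complex.ext <;> simp [h1, h2]

lemma hp_exists (z : ℂ) : ∃ b : ℂ, (0 < b.re ∨ (b.re = 0 ∧ 0 ≤ b.im)) ∧ b * b = z := by
  obtain ⟨w, hw⟩ := IsAlgClosed.exists_pow_nat_eq z (n := 2) (by norm_num)
  rw [sq] at hw
  by_cases h : 0 < w.re ∨ (w.re = 0 ∧ 0 ≤ w.im)
  · exact ⟨w, h, hw⟩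
  · refine ⟨-w, ?_, by rw [neg_mul_neg, hw]⟩
    push Not at h
    simp only [Complex.neg_re, Complex.neg_im]
    rcases lt_or_eq_of_le h.1 with h1 | h1
    · left; linarith
    · right; exact ⟨by linarith, by linarith [h.2 h1]⟩

lemma conj_iff (s t p q u v : ℂ) (r : Matrix (Fin 2) (Fin 2) ℂ) (h : s * t ≠ 0) :
    !![s, 0; 0, t] * !![p, q; u, v] * (!![s, 0; 0, t])⁻¹ = r ↔
      r = !![p, s * q / t; t * u / s, v] := by
  have hs : s ≠ 0 := left_ne_zero_of_mul h
  have ht : t ≠ 0 := right_ne_zero_of_mul h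
  have hi : (!![s, 0; 0, t])⁻¹ = !![s⁻¹, 0; 0, t⁻¹] := by
    apply Matrix.inv_eq_right_inv
    ext i j; fin_cases i <;> fin_cases j <;> simp [hs, ht]
  have : !![s, 0; 0, t] * !![p, q; u, v] * (!![s, 0; 0, t])⁻¹
      = !![p, s * q / t; t * u / s, v] := by
    rw [hi]
    ext i j; fin_cases i <;> fin_cases j <;> simp <;> field_simp
  rw [this]; exact eq_comm

lemma fix_eqs (p q u v : ℂ) (hg : IsUnit !![p, q; u, v])
    (h : sig !![p, q; u, v] = !![p, q; u, v]) :
    p * p - q * u = 1 ∧ q * (p - v) = 0 ∧ u * (p - v) = 0 ∧ v * v - u * q = 1 := by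
  have hI : Imat * Imat = 1 := by
    ext i j; fin_cases i <;> fin_cases j <;> simp [Imat]
  have hI' : Imat⁻¹ = Imat := Matrix.inv_eq_right_inv hI
  have hd := (Matrix.isUnit_iff_isUnit_det _).mp hg
  have key : !![p, q; u, v] * Imat * !![p, q; u, v] = Imat := by
    conv_lhs => rw [← h]
    conv_lhs => rw [h]
    conv_lhs => enter [2]; rw [← h]
    unfold sig
    rw [hI', mul_assoc Imat, ← mul_assoc, mul_assoc _ Imat Imat, hI, mul_one, ← mul_assoc,
      Matrix.mul_nonsing_inv _ hd, one_mul]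
  have h00 := congrFun (congrFun key 0) 0
  have h01 := congrFun (congrFun key 0) 1
  have h10 := congrFun (congrFun key 1) 0
  have h11 := congrFun (congrFun key 1) 1
  simp [Imat, Matrix.mul_apply, Fin.sum_univ_two] at h00 h01 h10 h11
  refine ⟨?_, ?_, ?_, ?_⟩
  · linear_combination h00
  · linear_combination h01
  · linear_combination h10
  · linear_combination -h11

lemma mat_inj {a b c d a' b' c' d' : ℂ} (h : !![a, b; c, d] = !![a', b'; c', d']) :
    a = a' ∧ b = b' ∧ c = c' ∧ d = d' :=
  ⟨by simpa using congrFun (congrFun h 0) 0, by simpa using congrFun (congrFun h 0) 1,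
   by simpa using congrFun (congrFun h 1) 0, by simpa using congrFun (congrFun h 1) 1⟩

/-- Entrywise description of membership. -/
lemma reps_iff (a b c d : ℂ) : !![a, b; c, d] ∈ Reps ↔
    (a = d ∧ b = c ∧ a * a - b * b = 1 ∧ (0 < b.re ∨ (b.re = 0 ∧ 0 ≤ b.im))) ∨
    ((a = 1 ∨ a = -1) ∧ b = 1 ∧ c = 0 ∧ d = a) ∨
    ((a = 1 ∨ a = -1) ∧ b = 0 ∧ c = 1 ∧ d = a) ∨
    ((a = 1 ∨ a = -1) ∧ b = 0 ∧ c = 0 ∧ d = -a) := by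
  constructor
  · rintro (((⟨x, y, h1, h2, h⟩ | ⟨e, he, h⟩) | ⟨e, he, h⟩) | ⟨e, he, h⟩) <;>
      obtain ⟨rfl, rfl, rfl, rfl⟩ := mat_inj h
    · left; exact ⟨rfl, rfl, by linear_combination h1, (hp_iff _).mp h2⟩
    · right; left; exact ⟨he, rfl, rfl, rfl⟩
    · right; right; left; exact ⟨he, rfl, rfl, rfl⟩
    · right; right; right; exact ⟨he, rfl, rfl, rfl⟩
  · rintro (⟨rfl, rfl, h1, h2⟩ | ⟨he, rfl, rfl, rfl⟩ | ⟨he, rfl, rfl, rfl⟩ | ⟨he, rfl, rfl, rfl⟩)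
    · exact Or.inl (Or.inl (Or.inl ⟨_, _, by linear_combination h1, (hp_iff _).mpr h2, rfl⟩))
    · exact Or.inl (Or.inl (Or.inr ⟨_, he, rfl⟩))
    · exact Or.inl (Or.inr ⟨_, he, rfl⟩)
    · exact Or.inr ⟨_, he, rfl⟩

lemma reps_unique (p v b c b' c' : ℂ) (h : !![p, b; c, v] ∈ Reps) (h' : !![p, b'; c', v] ∈ Reps)
    (hm : b * c = b' * c') (hb : b = 0 ↔ b' = 0) (hc : c = 0 ↔ c' = 0) :
    b = b' ∧ c = c' := by
  rw [reps_iff] at h h'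
  rcases h with ⟨h1, h2, h3, h4⟩ | ⟨h1, h2, h3, h4⟩ | ⟨h1, h2, h3, h4⟩ | ⟨h1, h2, h3, h4⟩ <;>
  rcases h' with ⟨k1, k2, k3, k4⟩ | ⟨k1, k2, k3, k4⟩ | ⟨k1, k2, k3, k4⟩ | ⟨k1, k2, k3, k4⟩
  · subst h2 k2
    have := hp_unique _ _ h4 k4 hm
    exact ⟨this, this⟩
  all_goals grind

/-- `R` is a complete set of representatives of the `K`-orbits in
`X = {g ∈ GL₂(ℂ) : σ(g) = g}`: every `g ∈ X` is conjugate by an invertible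
diagonal matrix to exactly one element of `R`. -/
theorem complete_set_of_representatives
    (g : Matrix (Fin 2) (Fin 2) ℂ) (hg : IsUnit g) (hfix : sig g = g) :
    ∃! r : Matrix (Fin 2) (Fin 2) ℂ, r ∈ Reps ∧
      ∃ s t : ℂ, s * t ≠ 0 ∧ !![s, 0; 0, t] * g * (!![s, 0; 0, t])⁻¹ = r := by
  obtain ⟨p, q, u, v, rfl⟩ : ∃ p q u v, g = !![p, q; u, v] :=
    ⟨_, _, _, _, Matrix.eta_fin_two g⟩
  obtain ⟨e1, e2, e3, e4⟩ := fix_eqs p q u v hg hfix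
  apply existsUnique_of_exists_of_unique
  · suffices H : ∃ s t : ℂ, s * t ≠ 0 ∧ !![p, s * q / t; t * u / s, v] ∈ Reps by
      obtain ⟨s, t, h, hr⟩ := H
      exact ⟨_, hr, s, t, h, (conj_iff s t p q u v _ h).mpr rfl⟩
    simp only [reps_iff]
    by_cases hpv : p = v
    · subst hpv
      by_cases hq : q = 0
      · subst hq
        have hp : p = 1 ∨ p = -1 := mul_self_eq_one_iff.mp (by linear_combination e1)
        by_cases hu : u = 0
        · subst hu
          refine ⟨1, 1, by simp, Or.inl ⟨rfl, by simp, ?_, by simp⟩⟩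
          simpa using e1
        · exact ⟨u, 1, by simpa using hu, Or.inr (Or.inr (Or.inl
            ⟨hp, by simp, by field_simp, rfl⟩))⟩
      · by_cases hu : u = 0
        · subst hu
          have hp : p = 1 ∨ p = -1 := mul_self_eq_one_iff.mp (by linear_combination e1)
          exact ⟨1, q, by simpa using hq, Or.inr (Or.inl
            ⟨hp, by field_simp, by simp, rfl⟩)⟩
        · obtain ⟨b, hb, hbb⟩ := hp_exists (q * u)
          have hb0 : b ≠ 0 := by
            rintro rfl
            exact mul_ne_zero hq hu (by rw [← hbb, mul_zero])
          have x1 : b * q / q = b := by field_simp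
          have x2 : q * u / b = b := by rw [← hbb]; field_simp
          refine ⟨b, q, mul_ne_zero hb0 hq, Or.inl ?_⟩
          rw [x1, x2]
          exact ⟨rfl, rfl, by rw [hbb]; exact e1, hb⟩
    · have hq : q = 0 := (mul_eq_zero.mp e2).resolve_right (sub_ne_zero.mpr hpv)
      have hu : u = 0 := (mul_eq_zero.mp e3).resolve_right (sub_ne_zero.mpr hpv)
      subst hq hu
      have hp : p = 1 ∨ p = -1 := mul_self_eq_one_iff.mp (by linear_combination e1)
      have hv : v = -p := by
        have : (p - v) * (v + p) = 0 := by linear_combination e1 - e4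
        have := (mul_eq_zero.mp this).resolve_left (sub_ne_zero.mpr hpv)
        linear_combination this
      exact ⟨1, 1, by simp, Or.inr (Or.inr (Or.inr ⟨hp, by simp, by simp, hv⟩))⟩
  · rintro r r' ⟨hr, s, t, h, e⟩ ⟨hr', s', t', h', e'⟩
    rw [conj_iff _ _ _ _ _ _ _ h] at e
    rw [conj_iff _ _ _ _ _ _ _ h'] at e'
    subst e e'
    have hs : s ≠ 0 := left_ne_zero_of_mul h
    have ht : t ≠ 0 := right_ne_zero_of_mul h
    have hs' : s' ≠ 0 := left_ne_zero_of_mul h'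
    have ht' : t' ≠ 0 := right_ne_zero_of_mul h'
    obtain ⟨k1, k2⟩ := reps_unique _ _ _ _ _ _ hr hr' (by field_simp)
      (by simp [hs, ht, hs', ht']) (by simp [hs, ht, hs', ht'])
    rw [k1, k2]
end
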